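/- arXiv:1911.01302 — 7 statements merged into one kernel-verified Lean document; each statement's English description precedes it below -/
import Mathlib

section
/- (Denjoy–Carleman theorem) Let [a,b] ⊂ ℝ with a < b and let M = (M_n)_{n∈ℕ} be a sequence of positive real numbers with M_0 = 1 and liminf_{n→∞} M_n^{1/n} = ∞. Define β_n = inf_{k≥n, k≥1} M_k^{1/k}. Then the class C_M([a,b]) is quasi-analytic (every f ∈ C_M([a,b]) all of whose derivatives vanish at some point c ∈ [a,b] is identically zero) if and only if the series ∑_{n≥1} 1/β_n diverges. -/
open Set Filter

/-- `f` belongs to the class `C_M([a,b])`: it is infinitely differentiable on `[a,b]`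
and its derivatives satisfy `|f⁽ⁿ⁾(x)| ≤ c · Cⁿ · Mₙ` for some positive constants `c, C`. -/
def MemCM (a b : ℝ) (M : ℕ → ℝ) (f : ℝ → ℝ) : Prop :=
  ContDiffOn ℝ (⊤ : ℕ∞) f (Icc a b) ∧
    ∃ c C : ℝ, 0 < c ∧ 0 < C ∧ ∀ n : ℕ, ∀ x ∈ Icc a b,
      |iteratedDerivWithin n f (Icc a b) x| ≤ c * C ^ n * M n

/-!
Since `M n ^ (1 / n) → ∞`, the largest log-convex minorant of `M` has the form `M 0 * ∏ k < n, ν k`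
with `ν` nondecreasing, and it agrees with `M` at infinitely many `n`. Carleman's inequality
`∑ (a 0 ⋯ a n) ^ (1 / (n + 1)) ≤ e ∑ a n`, applied to `a = 1 / ν`, shows that if `∑ 1 / ν n`
converges then so does `∑ 1 / β n`.

If `∑ 1 / ν n` diverges, Bang's argument gives quasi-analyticity: let `f` be flat at `x₀` and say
that `x` has level `i` when `|f⁽ʲ⁾| ≤ c e ^ (j - i) ν 0 ⋯ ν (j - 1)` holds up to `x` for all `j`
below the first contact point beyond `i`. Comparing the derivatives with exponentials shows that
moving on by `1 / (e ν i)` lowers the level only from `i + 1` to `i`. As `x₀` has every level,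
divergence gives every level to every point, whence `f = 0`.

If `∑ 1 / β n` converges, take the means of a ramp function over intervals of lengths
`a n = ε / β (n + 1)` one after the other. Each mean turns one derivative into a difference quotient
of size `2 / a n`, which bounds the `n`-th derivative of the limit by
`(2 / ε) ^ n β 1 ⋯ β n`, and `β 1 ⋯ β n ≤ β n ^ n ≤ M n` for `n ≥ 1`. For small `ε` the limit is
close to the ramp, hence nonzero, while averaging to the left keeps it zero up to the start of the
ramp.
-/

open scoped NNReal

section ConvexMinorant

variable {u : ℕ → ℝ} {m m' : ℝ} {p q p' q' : ℕ}

/-- The line of slope `m` through `(p, u p)` lies below the graph of `u` and touches it at `p`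
and at `q`: an edge of the lower convex envelope, possibly subdivided. -/
structure IsSupportingChord (u : ℕ → ℝ) (m : ℝ) (p q : ℕ) : Prop where
  le : ∀ k : ℕ, u p + m * (k - p) ≤ u k
  eq : u q = u p + m * (q - p)

theorem IsSupportingChord.slope_le (h : IsSupportingChord u m p q)
    (h' : IsSupportingChord u m' p' q') (hlt : p' < q) : m' ≤ m := by
  have hpos : (0 : ℝ) < q - p' := sub_pos.2 (Nat.cast_lt.2 hlt)
  refine le_of_mul_le_mul_right ?_ hpos
  linarith [h.le p', h.eq, h'.le q]

theorem IsSupportingChord.line_eq (h : IsSupportingChord u m p q)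
    (h' : IsSupportingChord u m' p' q') (hm : m ≤ m') {x : ℕ} (hp : p' ≤ x) (hq : x ≤ q) :
    u p + m * (x - p) = u p' + m' * (x - p') := by
  rcases lt_or_ge p' q with hlt | hge
  · obtain rfl : m = m' := hm.antisymm (h.slope_le h' hlt)
    linarith [h.le p', h'.le p]
  · obtain rfl : p' = x := by omega
    obtain rfl : p' = q := by omega
    simp [h.eq]

theorem tendsto_slope_atTop_of_tendsto_div (hu : Tendsto (fun n : ℕ => u n / n) atTop atTop)
    (p : ℕ) : Tendsto (fun k : ℕ => (u k - u p) / ((k : ℝ) - p)) atTop atTop := by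
  have hsub : Tendsto (fun k : ℕ => u k / k - u p / k) atTop atTop :=
    hu.atTop_add (tendsto_const_div_atTop_nhds_zero_nat (u p)).neg
  have hratio : Tendsto (fun k : ℕ => (k : ℝ) / (k + (-p : ℝ))) atTop (nhds 1) :=
    tendsto_natCast_div_add_atTop _
  refine (hsub.atTop_mul_pos one_pos hratio).congr' ?_
  filter_upwards [eventually_gt_atTop p] with k hk
  have hk₀ : (k : ℝ) ≠ 0 := by exact_mod_cast (Nat.zero_lt_of_lt hk).ne'
  rw [← sub_eq_add_neg, ← sub_div, div_mul_div_cancel₀ hk₀]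

-- The slopes of the chords from `p` to `q` are minimised over `q > i`, then maximised over `p ≤ i`.
theorem exists_isSupportingChord (hu : Tendsto (fun n : ℕ => u n / n) atTop atTop) (i : ℕ) :
    ∃ m p q, p ≤ i ∧ i < q ∧ IsSupportingChord u m p q := by
  set σ : ℕ → ℕ → ℝ := fun p k => (u k - u p) / ((k : ℝ) - p) with hσ
  have hσ_mul {p k : ℕ} (hpk : p < k) : u k = u p + σ p k * (k - p) := by
    have hne : (k : ℝ) - p ≠ 0 := sub_ne_zero.2 (Nat.cast_lt.2 hpk).ne'
    rw [hσ, div_mul_cancel₀ _ hne]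
    ring
  have hmin (p : ℕ) : ∃ q ∈ Ioi i, ∀ k ∈ Ioi i, σ p q ≤ σ p k :=
    Tendsto.exists_within_forall_le nonempty_Ioi
      (Nat.cofinite_eq_atTop ▸ tendsto_slope_atTop_of_tendsto_div hu p)
  choose q hiq hmin using hmin
  obtain ⟨p, hp, hmax⟩ := (Finset.range (i + 1)).exists_max_image (fun p => σ p (q p)) ⟨0, by simp⟩
  have hpi : p ≤ i := Finset.mem_range_succ_iff.1 hp
  have hright (k : ℕ) (hk : i < k) : u p + σ p (q p) * (k - p) ≤ u k := by
    have hpk : p < k := hpi.trans_lt hk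
    rw [hσ_mul hpk]
    have hpos : (0 : ℝ) ≤ k - p := sub_nonneg.2 (Nat.cast_le.2 hpk.le)
    gcongr
    exact hmin p k hk
  refine ⟨σ p (q p), p, q p, hpi, hiq p, fun k => ?_, hσ_mul (hpi.trans_lt (hiq p))⟩
  rcases lt_or_ge i k with hik | hki
  · exact hright k hik
  · have hkq : k < q k := hki.trans_lt (hiq k)
    have hpos : (0 : ℝ) ≤ q k - k := sub_nonneg.2 (Nat.cast_le.2 hkq.le)
    have hslope : σ k (q k) * (q k - k) ≤ σ p (q p) * (q k - k) :=
      mul_le_mul_of_nonneg_right (hmax k (Finset.mem_range_succ_iff.2 hki)) hpos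
    linarith [hright (q k) (hiq k), hσ_mul hkq]

theorem exists_convex_minorant (hu : Tendsto (fun n : ℕ => u n / n) atTop atTop) :
    ∃ (m : ℕ → ℝ) (w : ℕ → ℕ), (∀ n, u 0 + ∑ k ∈ Finset.range n, m k ≤ u n) ∧
      (∀ i, u (w i) = u 0 + ∑ k ∈ Finset.range (w i), m k) ∧
      (∀ i, i < w i) ∧ Monotone w ∧ ∀ i, ∀ j < w i, m j ≤ m i := by
  classical
  choose m p q hp hq h using exists_isSupportingChord hu
  have hmax (i j : ℕ) (hj : j < q i) : m j ≤ m i := (h i).slope_le (h j) ((hp j).trans_lt hj)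
  have hsum (n : ℕ) : u 0 + ∑ k ∈ Finset.range n, m k = u (p n) + m n * (n - p n) := by
    induction n with
    | zero => simp [Nat.le_zero.1 (hp 0)]
    | succ n ih =>
      have hmono : m n ≤ m (n + 1) := hmax _ _ (n.lt_succ_self.trans (hq _))
      have hline := (h n).line_eq (h (n + 1)) hmono (hp _) (Nat.succ_le_of_lt (hq n))
      rw [Finset.sum_range_succ, ← add_assoc, ih, ← hline]
      push_cast
      ring
  have hcontact (i : ℕ) : u (q i) = u 0 + ∑ k ∈ Finset.range (q i), m k := by
    have hmono : m i ≤ m (q i) := hmax _ _ ((hq i).trans (hq _))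
    rw [hsum, (h i).eq, (h i).line_eq (h (q i)) hmono (hp _) le_rfl]
  have hexists (i : ℕ) : ∃ n, i < n ∧ u n = u 0 + ∑ k ∈ Finset.range n, m k :=
    ⟨q i, hq i, hcontact i⟩
  refine ⟨m, fun i => Nat.find (hexists i), fun n => hsum n ▸ (h n).le n,
    fun i => (Nat.find_spec (hexists i)).2, fun i => (Nat.find_spec (hexists i)).1,
    fun i j hij => Nat.find_mono fun n hn => ⟨hij.trans_lt hn.1, hn.2⟩, fun i j hj => ?_⟩
  exact hmax i j (hj.trans_le (Nat.find_min' _ ⟨hq i, hcontact i⟩))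

theorem exists_logConvex_minorant {M : ℕ → ℝ} (hM : ∀ n, 0 < M n)
    (hroot : Tendsto (fun n : ℕ => M n ^ (1 / (n : ℝ))) atTop atTop) :
    ∃ (ν : ℕ → ℝ) (w : ℕ → ℕ), (∀ i, 0 < ν i) ∧ (∀ n, M 0 * ∏ k ∈ Finset.range n, ν k ≤ M n) ∧
      (∀ i, M (w i) = M 0 * ∏ k ∈ Finset.range (w i), ν k) ∧
      (∀ i, i < w i) ∧ Monotone w ∧ ∀ i, ∀ j < w i, ν j ≤ ν i := by
  have hlog : Tendsto (fun n : ℕ => Real.log (M n) / n) atTop atTop :=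
    (Real.tendsto_log_atTop.comp hroot).congr fun n => by
      rw [Function.comp_apply, Real.log_rpow (hM n), one_div_mul_eq_div]
  obtain ⟨m, w, hle, hcontact, hlt, hmono, hmax⟩ := exists_convex_minorant hlog
  have hexp (n : ℕ) : M 0 * ∏ k ∈ Finset.range n, Real.exp (m k) =
      Real.exp (Real.log (M 0) + ∑ k ∈ Finset.range n, m k) := by
    rw [Real.exp_add, Real.exp_log (hM 0), Real.exp_sum]
  refine ⟨fun k => Real.exp (m k), w, fun i => Real.exp_pos _, fun n => ?_, fun i => ?_, hlt,
    hmono, fun i j hj => Real.exp_le_exp.2 (hmax i j hj)⟩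
  · rw [hexp, ← Real.le_log_iff_exp_le (hM n)]
    exact hle n
  · rw [hexp, ← hcontact, Real.exp_log (hM _)]

end ConvexMinorant

section DerivChain

variable {E : Type*} [NormedAddCommGroup E] [NormedSpace ℝ E] {G : ℕ → ℝ → E} {f : ℝ → E}
  {s s' : Set ℝ} {a b : ℝ}

/-- A sequence of functions on `s`, each the derivative within `s` of the preceding one. -/
def IsDerivChain (G : ℕ → ℝ → E) (s : Set ℝ) : Prop :=
  ∀ n, ∀ t ∈ s, HasDerivWithinAt (G n) (G (n + 1) t) s t

theorem IsDerivChain.mono (hG : IsDerivChain G s) (h : s' ⊆ s) : IsDerivChain G s' :=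
  fun n t ht => (hG n t (h ht)).mono h

theorem IsDerivChain.comp_lineMap (hG : IsDerivChain G s) {x y : ℝ}
    (h : MapsTo (AffineMap.lineMap x y) s' s) :
    IsDerivChain (fun n t => (y - x) ^ n • G n (AffineMap.lineMap x y t)) s' := by
  intro n t ht
  simp only [pow_succ, mul_smul]
  exact ((hG n _ (h ht)).scomp t AffineMap.hasDerivWithinAt_lineMap h).const_smul _

theorem IsDerivChain.iteratedDerivWithin_eq (hG : IsDerivChain G s) (hs : UniqueDiffOn ℝ s)
    (n : ℕ) : EqOn (iteratedDerivWithin n (G 0) s) (G n) s := by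
  induction n with
  | zero => exact fun t _ => congrFun iteratedDerivWithin_zero t
  | succ n ih =>
    intro t ht
    rw [iteratedDerivWithin_succ, derivWithin_congr ih (ih ht)]
    exact (hG n t ht).derivWithin (hs t ht)

theorem IsDerivChain.contDiffOn (hG : IsDerivChain G s) (hs : UniqueDiffOn ℝ s) :
    ContDiffOn ℝ (⊤ : ℕ∞) (G 0) s :=
  contDiffOn_of_differentiableOn_deriv fun n _ =>
    DifferentiableOn.congr (fun t ht => (hG n t ht).differentiableWithinAt)
      (hG.iteratedDerivWithin_eq hs n)

theorem isDerivChain_iteratedDerivWithin (hf : ContDiffOn ℝ (⊤ : ℕ∞) f s)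
    (hs : UniqueDiffOn ℝ s) : IsDerivChain (fun n => iteratedDerivWithin n f s) s := by
  intro n t ht
  beta_reduce
  rw [iteratedDerivWithin_succ]
  exact (hf.differentiableOn_iteratedDerivWithin (mod_cast WithTop.coe_lt_top n) hs t
    ht).hasDerivWithinAt

theorem IsDerivChain.norm_le_mul_exp {W : ℕ → ℝ} {κ : ℝ} {n : ℕ} (hκ : 0 ≤ κ)
    (hG : IsDerivChain G (Icc a b)) (hW : ∀ j < n, W (j + 1) ≤ κ * W j)
    (ha : ∀ j < n, ‖G j a‖ ≤ W j) (hn : ∀ t ∈ Icc a b, ‖G n t‖ ≤ W n) {j : ℕ} (hj : j ≤ n) :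
    ∀ t ∈ Icc a b, ‖G j t‖ ≤ W j * Real.exp (κ * (t - a)) := by
  induction hj using Nat.decreasingInduction with
  | self =>
    intro t ht
    have hexp : 1 ≤ Real.exp (κ * (t - a)) :=
      Real.one_le_exp (mul_nonneg hκ (sub_nonneg.2 ht.1))
    exact (hn t ht).trans (le_mul_of_one_le_right ((norm_nonneg _).trans (hn t ht)) hexp)
  | of_succ j hj ih =>
    refine image_norm_le_of_norm_deriv_right_le_deriv_boundary
      (B' := fun t => κ * W j * Real.exp (κ * (t - a)))
      (fun t ht => (hG j t ht).continuousWithinAt)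
      (fun t ht => (hG j t (Ico_subset_Icc_self ht)).mono_of_mem_nhdsWithin
        (mem_of_superset (Icc_mem_nhdsGE ht.2) (Icc_subset_Icc_left ht.1)))
      (by simpa using ha j hj) (fun t => ?_) (fun t ht => ?_)
    · have hderiv := ((((hasDerivAt_id t).sub_const a).const_mul κ).exp).const_mul (W j)
      exact hderiv.congr_deriv (by simp only [id_eq]; ring)
    · exact (ih t (Ico_subset_Icc_self ht)).trans
        (mul_le_mul_of_nonneg_right (hW j hj) (Real.exp_pos _).le)

end DerivChain

section Bang

variable {E : Type*} [NormedAddCommGroup E] [NormedSpace ℝ E] {G : ℕ → ℝ → E} {a b c : ℝ}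
  {ν : ℕ → ℝ} {w : ℕ → ℕ}

-- The weights `exp (j - i)` make the bound on `G n` hold for free, as `i < n`,
-- and moving by `1 / (e ν i)` costs exactly one unit of `i`.
theorem IsDerivChain.norm_le_of_sub_le_one_div (hG : IsDerivChain G (Icc a b))
    (hν : ∀ i, 0 < ν i) (hc : 0 ≤ c) {i n : ℕ} (hin : i < n) (hmax : ∀ j < n, ν j ≤ ν i)
    (hn : ∀ t ∈ Icc a b, ‖G n t‖ ≤ c * ∏ k ∈ Finset.range n, ν k)
    (ha : ∀ j < n, ‖G j a‖ ≤ c * Real.exp (j - (i + 1)) * ∏ k ∈ Finset.range j, ν k) :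
    ∀ j < n, ∀ t ∈ Icc a b, t - a ≤ 1 / (Real.exp 1 * ν i) →
      ‖G j t‖ ≤ c * Real.exp (j - i) * ∏ k ∈ Finset.range j, ν k := by
  intro j hj t ht hta
  have hprod (j : ℕ) : 0 < ∏ k ∈ Finset.range j, ν k := Finset.prod_pos fun k _ => hν k
  have hκ : 0 < Real.exp 1 * ν i := mul_pos (Real.exp_pos 1) (hν i)
  have hgrowth := hG.norm_le_mul_exp
    (W := fun j => c * Real.exp (j - (i + 1)) * ∏ k ∈ Finset.range j, ν k) hκ.le
    (fun j hj => ?_) ha (fun t ht => ?_) hj.le t ht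
  · have hexp : Real.exp (Real.exp 1 * ν i * (t - a)) ≤ Real.exp 1 :=
      Real.exp_le_exp.2 (by rwa [mul_comm, ← le_div_iff₀ hκ])
    calc ‖G j t‖ ≤ _ := hgrowth
      _ ≤ c * Real.exp (j - (i + 1)) * (∏ k ∈ Finset.range j, ν k) * Real.exp 1 := by
        have := (hprod j).le
        gcongr
      _ = c * (Real.exp (j - (i + 1)) * Real.exp 1) * ∏ k ∈ Finset.range j, ν k := by ring
      _ = c * Real.exp (j - i) * ∏ k ∈ Finset.range j, ν k := by
        rw [← Real.exp_add]
        ring_nf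
  · calc c * Real.exp ((j + 1 : ℕ) - (i + 1)) * ∏ k ∈ Finset.range (j + 1), ν k
        = Real.exp 1 * ν j * (c * Real.exp (j - (i + 1)) * ∏ k ∈ Finset.range j, ν k) := by
          rw [Nat.cast_succ, add_sub_right_comm, Real.exp_add, Finset.prod_range_succ]
          ring
      _ ≤ _ := by
        have := (hprod j).le
        gcongr
        exact hmax j hj
  · have hexp : 1 ≤ Real.exp (n - (i + 1)) :=
      Real.one_le_exp (sub_nonneg.2 (by exact_mod_cast hin))
    refine (hn t ht).trans (mul_le_mul_of_nonneg_right ?_ (hprod n).le)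
    exact le_mul_of_one_le_right hc hexp

theorem IsDerivChain.norm_le_of_sub_le_sum (hG : IsDerivChain G (Icc a b))
    (hν : ∀ i, 0 < ν i) (hc : 0 ≤ c) (hlt : ∀ i, i < w i) (hw : Monotone w)
    (hmax : ∀ i, ∀ j < w i, ν j ≤ ν i) (ha : ∀ j, G j a = 0)
    (hbound : ∀ i, ∀ t ∈ Icc a b, ‖G (w i) t‖ ≤ c * ∏ k ∈ Finset.range (w i), ν k)
    {i N : ℕ} (hi : i ≤ N) :
    ∀ j < w i, ∀ t ∈ Icc a b, t - a ≤ ∑ k ∈ Finset.Ico i N, 1 / (Real.exp 1 * ν k) →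
      ‖G j t‖ ≤ c * Real.exp (j - i) * ∏ k ∈ Finset.range j, ν k := by
  have hprod (j : ℕ) : 0 ≤ ∏ k ∈ Finset.range j, ν k := Finset.prod_nonneg fun k _ => (hν k).le
  induction hi using Nat.decreasingInduction with
  | self =>
    intro j _ t ht hta
    obtain rfl : t = a := le_antisymm (by simpa using hta) ht.1
    rw [ha, norm_zero]
    exact mul_nonneg (mul_nonneg hc (Real.exp_pos _).le) (hprod j)
  | of_succ i hi ih =>
    intro j hj t ht hta
    push_cast at ih
    rw [Finset.sum_eq_sum_Ico_succ_bot hi] at hta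
    set T := ∑ k ∈ Finset.Ico (i + 1) N, 1 / (Real.exp 1 * ν k)
    have hT : 0 ≤ T := Finset.sum_nonneg fun k _ =>
      one_div_nonneg.2 (mul_pos (Real.exp_pos 1) (hν k)).le
    rcases le_or_gt (t - a) T with htT | hTt
    · refine (ih j (hj.trans_le (hw i.le_succ)) t ht htT).trans ?_
      have := hprod j
      gcongr
      linarith
    · have hsub : Icc (a + T) b ⊆ Icc a b := Icc_subset_Icc_left (by linarith)
      refine (hG.mono hsub).norm_le_of_sub_le_one_div hν hc (hlt i) (hmax i)
        (fun t ht => hbound i t (hsub ht)) (fun j hj => ?_) j hj t ⟨by linarith, ht.2⟩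
        (by linarith)
      exact ih j (hj.trans_le (hw i.le_succ)) (a + T) ⟨by linarith, by linarith [ht.2]⟩
        (by linarith)

theorem IsDerivChain.eq_zero_of_not_summable (hG : IsDerivChain G (Icc a b))
    (hν : ∀ i, 0 < ν i) (hc : 0 ≤ c) (hlt : ∀ i, i < w i) (hw : Monotone w)
    (hmax : ∀ i, ∀ j < w i, ν j ≤ ν i) (ha : ∀ j, G j a = 0)
    (hbound : ∀ i, ∀ t ∈ Icc a b, ‖G (w i) t‖ ≤ c * ∏ k ∈ Finset.range (w i), ν k)
    (hsum : ¬ Summable fun i => 1 / ν i) : ∀ t ∈ Icc a b, G 0 t = 0 := by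
  intro t ht
  have hdiv (i : ℕ) : ∃ N ≥ i, t - a ≤ ∑ k ∈ Finset.Ico i N, 1 / (Real.exp 1 * ν k) := by
    have hsum' : ¬ Summable fun k => 1 / (Real.exp 1 * ν (k + i)) := fun h => hsum <| by
      simp_rw [one_div, mul_inv] at h
      rw [summable_mul_left_iff (inv_ne_zero (Real.exp_ne_zero 1)),
        summable_nat_add_iff (f := fun k => (ν k)⁻¹)] at h
      simpa only [one_div] using h
    have hlim := (not_summable_iff_tendsto_nat_atTop_of_nonneg fun k =>
      one_div_nonneg.2 (mul_pos (Real.exp_pos 1) (hν (k + i))).le).1 hsum'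
    obtain ⟨n, hn⟩ := (hlim.eventually_ge_atTop (t - a)).exists
    refine ⟨i + n, i.le_add_right n, ?_⟩
    rw [Finset.sum_Ico_eq_sum_range, Nat.add_sub_cancel_left]
    simpa only [add_comm i] using hn
  have hdecay (i : ℕ) : ‖G 0 t‖ ≤ c * Real.exp (-i) := by
    obtain ⟨N, hiN, hN⟩ := hdiv i
    simpa using hG.norm_le_of_sub_le_sum hν hc hlt hw hmax ha hbound hiN 0
      (Nat.zero_lt_of_lt (hlt i)) t ht hN
  have hlim : Tendsto (fun i : ℕ => c * Real.exp (-i)) atTop (nhds 0) := by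
    simpa using (Real.tendsto_exp_neg_atTop_nhds_zero.comp tendsto_natCast_atTop_atTop).const_mul c
  exact norm_le_zero_iff.1 (ge_of_tendsto' hlim hdecay)

end Bang

section CarlemanClass

variable {E : Type*} [NormedAddCommGroup E] [NormedSpace ℝ E] {s : Set ℝ} {M : ℕ → ℝ} {f : ℝ → E}

/-- The class `C_M(s)` of smooth functions on `s` with values in a normed space;
`MemCM a b` is the case of real functions on `s = Icc a b`. -/
def MemCarlemanClass (s : Set ℝ) (M : ℕ → ℝ) (f : ℝ → E) : Prop :=
  ContDiffOn ℝ (⊤ : ℕ∞) f s ∧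
    ∃ c C : ℝ, 0 < c ∧ 0 < C ∧ ∀ n : ℕ, ∀ x ∈ s, ‖iteratedDerivWithin n f s x‖ ≤ c * C ^ n * M n

theorem IsDerivChain.memCarlemanClass {G : ℕ → ℝ → E} (hG : IsDerivChain G s)
    (hs : UniqueDiffOn ℝ s) {c C : ℝ} (hc : 0 < c) (hC : 0 < C)
    (hbound : ∀ n, ∀ x ∈ s, ‖G n x‖ ≤ c * C ^ n * M n) : MemCarlemanClass s M (G 0) :=
  ⟨hG.contDiffOn hs, c, C, hc, hC, fun n x hx => by
    rw [hG.iteratedDerivWithin_eq hs n hx]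
    exact hbound n x hx⟩

variable (E) in
/-- Quasi-analyticity of the class `C_M(s)` of `E`-valued functions: a function in the class that
is flat at one point of `s` vanishes on `s`. -/
def IsQuasianalytic (s : Set ℝ) (M : ℕ → ℝ) : Prop :=
  ∀ f : ℝ → E, MemCarlemanClass s M f → ∀ x₀ ∈ s, (∀ n, iteratedDerivWithin n f s x₀ = 0) →
    ∀ x ∈ s, f x = 0

variable {ν : ℕ → ℝ} {w : ℕ → ℕ}

-- Parametrising the segment from `x₀` to `x` by `[0, 1]` treats both sides of `x₀` at once and
-- absorbs the geometric factor `C ^ n` into a rescaling of `ν`.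
theorem isQuasianalytic_of_not_summable (hs : Convex ℝ s) (hs' : (interior s).Nonempty)
    (hM : 0 ≤ M 0) (hν : ∀ i, 0 < ν i)
    (hcontact : ∀ i, M (w i) = M 0 * ∏ k ∈ Finset.range (w i), ν k) (hlt : ∀ i, i < w i)
    (hw : Monotone w) (hmax : ∀ i, ∀ j < w i, ν j ≤ ν i)
    (hsum : ¬ Summable fun i => 1 / ν i) : IsQuasianalytic E s M := by
  rintro f ⟨hf, c, C, hc, hC, hbound⟩ x₀ hx₀ hflat x hx
  rcases eq_or_ne x x₀ with rfl | hne
  · simpa using hflat 0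
  have hmaps : MapsTo (AffineMap.lineMap x₀ x) (Icc (0 : ℝ) 1) s := hs.mapsTo_lineMap hx₀ hx
  have hK : 0 < C * |x - x₀| := mul_pos hC (abs_pos.2 (sub_ne_zero.2 hne))
  have hchain :=
    (isDerivChain_iteratedDerivWithin hf (uniqueDiffOn_convex hs hs')).comp_lineMap hmaps
  have hzero := hchain.eq_zero_of_not_summable (ν := fun i => C * |x - x₀| * ν i)
    (fun i => mul_pos hK (hν i)) (mul_nonneg hc.le hM) hlt hw
    (fun i j hj => mul_le_mul_of_nonneg_left (hmax i j hj) hK.le)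
    (fun j => by simp [hflat]) (fun i t ht => ?_) ?_ 1 (right_mem_Icc.2 zero_le_one)
  · simpa using hzero
  · calc ‖(x - x₀) ^ w i • iteratedDerivWithin (w i) f s (AffineMap.lineMap x₀ x t)‖
        = |x - x₀| ^ w i * ‖iteratedDerivWithin (w i) f s (AffineMap.lineMap x₀ x t)‖ := by
          rw [norm_smul, norm_pow, Real.norm_eq_abs]
      _ ≤ |x - x₀| ^ w i * (c * C ^ w i * M (w i)) := by
          gcongr
          exact hbound _ _ (hmaps ht)
      _ = c * M 0 * ∏ k ∈ Finset.range (w i), C * |x - x₀| * ν k := by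
          rw [hcontact, Finset.prod_mul_distrib, Finset.prod_const, Finset.card_range, mul_pow]
          ring
  · simpa only [one_div, mul_inv (C * |x - x₀|),
      summable_mul_left_iff (inv_ne_zero hK.ne')] using hsum

end CarlemanClass

section Carleman

theorem succ_pow_le_exp_mul_factorial (n : ℕ) : ((n : ℝ) + 1) ^ n ≤ Real.exp n * n.factorial := by
  induction n with
  | zero => simp
  | succ n ih =>
    have hn : (0 : ℝ) < n + 1 := n.cast_add_one_pos
    have hratio : ((n : ℝ) + 1 + 1) / (n + 1) ≤ Real.exp (1 / (n + 1)) := by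
      rw [add_div, div_self hn.ne', add_comm]
      exact Real.add_one_le_exp _
    have hpow : (((n : ℝ) + 1 + 1) / (n + 1)) ^ (n + 1) ≤ Real.exp 1 := by
      calc _ ≤ Real.exp (1 / (n + 1)) ^ (n + 1) := by gcongr
        _ = Real.exp 1 := by
          rw [← Real.exp_nat_mul, Nat.cast_succ, mul_one_div_cancel hn.ne']
    push_cast [Nat.factorial_succ]
    calc ((n : ℝ) + 1 + 1) ^ (n + 1)
        = (((n : ℝ) + 1 + 1) / (n + 1)) ^ (n + 1) * ((n + 1) * (n + 1) ^ n) := by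
          rw [← pow_succ', ← mul_pow, div_mul_cancel₀ _ hn.ne']
      _ ≤ Real.exp 1 * ((n + 1) * (Real.exp n * n.factorial)) := by gcongr
      _ = Real.exp (n + 1) * ((n + 1) * n.factorial) := by
          rw [Real.exp_add]
          ring

variable {a : ℕ → ℝ}

-- AM-GM for the numbers `(i + 1) * a i`; these weights make the right-hand sides telescope.
theorem rpow_prod_range_le_exp_one_mul_sum_div (ha : ∀ i, 0 ≤ a i) (n : ℕ) :
    (∏ i ∈ Finset.range (n + 1), a i) ^ (((n + 1 : ℕ) : ℝ)⁻¹) ≤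
      Real.exp 1 * ((∑ i ∈ Finset.range (n + 1), (i + 1) * a i) / ((n + 1) * (n + 2))) := by
  have hn : (0 : ℝ) < (n + 1 : ℕ) := Nat.cast_pos.2 n.succ_pos
  have hterm (i : ℕ) : 0 ≤ ((i : ℝ) + 1) * a i := mul_nonneg i.cast_add_one_pos.le (ha i)
  set S := ∑ i ∈ Finset.range (n + 1), ((i : ℝ) + 1) * a i
  have hamgm : (∏ i ∈ Finset.range (n + 1), ((i : ℝ) + 1) * a i) ^ (((n + 1 : ℕ) : ℝ)⁻¹) ≤
      S / (n + 1 : ℕ) := by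
    simpa using Real.geom_mean_le_arith_mean (Finset.range (n + 1)) (fun _ => 1)
      (fun i => ((i : ℝ) + 1) * a i) (fun _ _ => zero_le_one) (by simpa using hn)
      (fun i _ => hterm i)
  have hprod : ∏ i ∈ Finset.range (n + 1), ((i : ℝ) + 1) * a i =
      (n + 1).factorial * ∏ i ∈ Finset.range (n + 1), a i := by
    rw [Finset.prod_mul_distrib, ← Finset.prod_range_add_one_eq_factorial]
    push_cast
    rfl
  have hfact : ((n : ℝ) + 2) ≤ Real.exp 1 * ((n + 1).factorial : ℝ) ^ (((n + 1 : ℕ) : ℝ)⁻¹) := by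
    have hpow := Real.rpow_le_rpow (by positivity) (succ_pow_le_exp_mul_factorial (n + 1))
      (inv_nonneg.2 hn.le)
    rw [Real.mul_rpow (by positivity) (by positivity), ← Real.exp_one_pow,
      Real.pow_rpow_inv_natCast (by positivity) n.succ_ne_zero,
      Real.pow_rpow_inv_natCast (by positivity) n.succ_ne_zero] at hpow
    simpa [add_assoc, one_add_one_eq_two] using hpow
  rw [hprod, Real.mul_rpow (by positivity) (Finset.prod_nonneg fun i _ => ha i)] at hamgm
  rw [← div_div, mul_div_assoc', le_div_iff₀ (by positivity)]
  calc _ ≤ (∏ i ∈ Finset.range (n + 1), a i) ^ (((n + 1 : ℕ) : ℝ)⁻¹) *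
        (Real.exp 1 * ((n + 1).factorial : ℝ) ^ (((n + 1 : ℕ) : ℝ)⁻¹)) := by
        gcongr
        exact Real.rpow_nonneg (Finset.prod_nonneg fun i _ => ha i) _
    _ = Real.exp 1 * (((n + 1).factorial : ℝ) ^ (((n + 1 : ℕ) : ℝ)⁻¹) *
        (∏ i ∈ Finset.range (n + 1), a i) ^ (((n + 1 : ℕ) : ℝ)⁻¹)) := by ring
    _ ≤ Real.exp 1 * (S / (n + 1)) := by
        gcongr
        exact_mod_cast hamgm

theorem sum_range_div_telescope (a : ℕ → ℝ) (N : ℕ) :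
    ∑ n ∈ Finset.range N, (∑ i ∈ Finset.range (n + 1), (i + 1) * a i) / ((n + 1) * (n + 2)) =
      ∑ i ∈ Finset.range (N + 1), a i -
        (∑ i ∈ Finset.range (N + 1), (i + 1) * a i) / (N + 1) := by
  induction N with
  | zero => simp
  | succ N ih =>
    rw [Finset.sum_range_succ, ih, Finset.sum_range_succ _ (N + 1),
      Finset.sum_range_succ _ (N + 1)]
    push_cast
    field

theorem summable_rpow_prod_range (ha : ∀ i, 0 ≤ a i) (hsum : Summable a) :
    Summable fun n : ℕ => (∏ i ∈ Finset.range (n + 1), a i) ^ (((n + 1 : ℕ) : ℝ)⁻¹) := by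
  have hS (n : ℕ) : 0 ≤ ∑ i ∈ Finset.range n, ((i : ℝ) + 1) * a i :=
    Finset.sum_nonneg fun i _ => mul_nonneg i.cast_add_one_pos.le (ha i)
  refine Summable.of_nonneg_of_le
    (fun n => Real.rpow_nonneg (Finset.prod_nonneg fun i _ => ha i) _)
    (rpow_prod_range_le_exp_one_mul_sum_div ha) (Summable.mul_left _ ?_)
  refine summable_of_sum_range_le (c := ∑' i, a i)
    (fun n => div_nonneg (hS _) (by positivity)) fun N => ?_
  rw [sum_range_div_telescope]
  exact (sub_le_self _ (div_nonneg (hS _) N.cast_add_one_pos.le)).trans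
    (hsum.sum_le_tsum _ fun i _ => ha i)

end Carleman

section InfRoot

variable {M ν : ℕ → ℝ} {n m k : ℕ}

/-- The numbers `β n = inf {M k ^ (1 / k) | k ≥ n, k ≥ 1}` of the Denjoy–Carleman theorem. -/
noncomputable def infRoot (M : ℕ → ℝ) (n : ℕ) : ℝ :=
  sInf {y : ℝ | ∃ k : ℕ, n ≤ k ∧ 1 ≤ k ∧ y = M k ^ (1 / (k : ℝ))}

theorem le_infRoot {y : ℝ} (h : ∀ k, n ≤ k → 1 ≤ k → y ≤ M k ^ (1 / (k : ℝ))) :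
    y ≤ infRoot M n := by
  refine le_csInf ⟨_, n + 1, n.le_succ, n.succ_pos, rfl⟩ ?_
  rintro _ ⟨k, hnk, hk, rfl⟩
  exact h k hnk hk

theorem infRoot_le (hM : ∀ n, 0 ≤ M n) (hnk : n ≤ k) (hk : 1 ≤ k) :
    infRoot M n ≤ M k ^ (1 / (k : ℝ)) := by
  refine csInf_le ⟨0, ?_⟩ ⟨k, hnk, hk, rfl⟩
  rintro _ ⟨j, -, -, rfl⟩
  exact Real.rpow_nonneg (hM j) _

theorem infRoot_mono (hM : ∀ n, 0 ≤ M n) : Monotone (infRoot M) :=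
  fun _ _ hnm => le_infRoot fun _ hmk hk => infRoot_le hM (hnm.trans hmk) hk

theorem infRoot_pos (hM : ∀ n, 0 < M n)
    (hroot : Tendsto (fun n : ℕ => M n ^ (1 / (n : ℝ))) atTop atTop) : 0 < infRoot M n := by
  obtain ⟨k, -, hmin⟩ := Tendsto.exists_within_forall_le (s := univ) univ_nonempty
    (Nat.cofinite_eq_atTop ▸ hroot)
  exact (Real.rpow_pos_of_pos (hM k) _).trans_le (le_infRoot fun j _ _ => hmin j (mem_univ j))

theorem prod_infRoot_le (hM : ∀ n, 0 < M n) (n : ℕ) :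
    ∏ i ∈ Finset.range n, infRoot M (i + 1) ≤ max 1 (M 0)⁻¹ * M n := by
  have hM' (n : ℕ) : 0 ≤ M n := (hM n).le
  have hnonneg (n : ℕ) : 0 ≤ infRoot M n := le_infRoot fun k _ _ => Real.rpow_nonneg (hM' k) _
  rcases n.eq_zero_or_pos with rfl | hn
  · rw [Finset.prod_range_zero, ← inv_mul_cancel₀ (hM 0).ne']
    exact mul_le_mul_of_nonneg_right (le_max_right _ _) (hM' 0)
  calc ∏ i ∈ Finset.range n, infRoot M (i + 1)
      ≤ ∏ _i ∈ Finset.range n, infRoot M n :=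
        Finset.prod_le_prod (fun i _ => hnonneg _) fun i hi =>
          infRoot_mono hM' (Nat.succ_le_of_lt (Finset.mem_range.1 hi))
    _ = infRoot M n ^ n := by rw [Finset.prod_const, Finset.card_range]
    _ ≤ (M n ^ (1 / (n : ℝ))) ^ n := pow_le_pow_left₀ (hnonneg n) (infRoot_le hM' le_rfl hn) n
    _ = M n := by rw [one_div, Real.rpow_inv_natCast_pow (hM' n) hn.ne']
    _ ≤ max 1 (M 0)⁻¹ * M n := le_mul_of_one_le_left (hM' n) (le_max_left _ _)

theorem pow_prod_range_le_of_monotone (hν : ∀ i, 0 ≤ ν i) (hmono : Monotone ν) (hnm : n ≤ m) :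
    (∏ k ∈ Finset.range n, ν k) ^ m ≤ (∏ k ∈ Finset.range m, ν k) ^ n := by
  have hprod (n : ℕ) : 0 ≤ ∏ k ∈ Finset.range n, ν k := Finset.prod_nonneg fun k _ => hν k
  induction m, hnm using Nat.le_induction with
  | base => rfl
  | succ m hnm ih =>
    have hlast : ∏ k ∈ Finset.range n, ν k ≤ ν m ^ n := by
      simpa using Finset.prod_le_prod (fun k _ => hν k) fun k hk =>
        hmono ((Finset.mem_range.1 hk).le.trans hnm)
    rw [pow_succ, Finset.prod_range_succ _ m, mul_pow]
    exact mul_le_mul ih hlast (hprod n) (pow_nonneg (hprod m) n)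

theorem rpow_prod_range_le_of_monotone (hν : ∀ i, 0 ≤ ν i) (hmono : Monotone ν) (hn : 0 < n)
    (hnm : n ≤ m) : (∏ k ∈ Finset.range n, ν k) ^ ((n : ℝ)⁻¹) ≤
      (∏ k ∈ Finset.range m, ν k) ^ ((m : ℝ)⁻¹) := by
  have hprod (n : ℕ) : 0 ≤ ∏ k ∈ Finset.range n, ν k := Finset.prod_nonneg fun k _ => hν k
  have hm : m ≠ 0 := (hn.trans_le hnm).ne'
  refine le_of_pow_le_pow_left₀ (mul_ne_zero hn.ne' hm) (Real.rpow_nonneg (hprod m) _) ?_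
  rw [pow_mul, Real.rpow_inv_natCast_pow (hprod n) hn.ne', mul_comm, pow_mul,
    Real.rpow_inv_natCast_pow (hprod m) hm]
  exact pow_prod_range_le_of_monotone hν hmono hnm

theorem min_mul_rpow_prod_range_le_infRoot (hM : 0 < M 0) (hν : ∀ i, 0 ≤ ν i)
    (hmono : Monotone ν) (hle : ∀ n, M 0 * ∏ k ∈ Finset.range n, ν k ≤ M n) (hn : 0 < n) :
    min 1 (M 0) * (∏ k ∈ Finset.range n, ν k) ^ ((n : ℝ)⁻¹) ≤ infRoot M n := by
  refine le_infRoot fun k hnk hk => ?_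
  have hprod (n : ℕ) : 0 ≤ ∏ k ∈ Finset.range n, ν k := Finset.prod_nonneg fun k _ => hν k
  have hmin : min 1 (M 0) ≤ M 0 ^ ((k : ℝ)⁻¹) := by
    have hpos : 0 < min 1 (M 0) := lt_min one_pos hM
    calc min 1 (M 0) ≤ min 1 (M 0) ^ ((k : ℝ)⁻¹) :=
          Real.self_le_rpow_of_le_one hpos.le (min_le_left _ _) (Nat.cast_inv_le_one k)
      _ ≤ M 0 ^ ((k : ℝ)⁻¹) :=
          Real.rpow_le_rpow hpos.le (min_le_right _ _) (by positivity)
  calc min 1 (M 0) * (∏ k ∈ Finset.range n, ν k) ^ ((n : ℝ)⁻¹)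
      ≤ M 0 ^ ((k : ℝ)⁻¹) * (∏ i ∈ Finset.range k, ν i) ^ ((k : ℝ)⁻¹) :=
        mul_le_mul hmin (rpow_prod_range_le_of_monotone hν hmono hn hnk)
          (Real.rpow_nonneg (hprod n) _) (Real.rpow_nonneg hM.le _)
    _ = (M 0 * ∏ i ∈ Finset.range k, ν i) ^ ((k : ℝ)⁻¹) :=
        (Real.mul_rpow hM.le (hprod k)).symm
    _ ≤ M k ^ (1 / (k : ℝ)) := by
        rw [one_div]
        exact Real.rpow_le_rpow (mul_nonneg hM.le (hprod k)) (hle k) (by positivity)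

theorem summable_one_div_infRoot (hM : 0 < M 0) (hν : ∀ i, 0 < ν i) (hmono : Monotone ν)
    (hle : ∀ n, M 0 * ∏ k ∈ Finset.range n, ν k ≤ M n) (hsum : Summable fun i => 1 / ν i) :
    Summable fun n => 1 / infRoot M (n + 1) := by
  have hlower (n : ℕ) := min_mul_rpow_prod_range_le_infRoot hM (fun i => (hν i).le) hmono hle
    n.succ_pos
  have hpos (n : ℕ) :
      0 < min 1 (M 0) * (∏ k ∈ Finset.range (n + 1), ν k) ^ (((n + 1 : ℕ) : ℝ)⁻¹) :=
    mul_pos (lt_min one_pos hM) (Real.rpow_pos_of_pos (Finset.prod_pos fun k _ => hν k) _)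
  refine Summable.of_nonneg_of_le (fun n => one_div_nonneg.2 ((hpos n).le.trans (hlower n)))
    (fun n => one_div_le_one_div_of_le (hpos n) (hlower n)) ?_
  refine ((summable_rpow_prod_range (fun i => one_div_nonneg.2 (hν i).le) hsum).mul_left
    (min 1 (M 0))⁻¹).congr fun n => ?_
  simp only [one_div, mul_inv, Finset.prod_inv_distrib]
  rw [Real.inv_rpow (Finset.prod_nonneg fun k _ => (hν k).le)]

end InfRoot

section Averaging

variable {E : Type*} [NormedAddCommGroup E] [NormedSpace ℝ E] {u v g : ℝ → E} {φ : ℝ → ℝ}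
  {h x y d : ℝ} {K : ℝ≥0} {a : ℕ → ℝ}

/-- The mean of `u` over `[x - h, x]`, written as an integral over `[0, 1]` so that nothing
degenerates at `h = 0`. -/
noncomputable def backwardAverage (h : ℝ) (u : ℝ → E) (x : ℝ) : E :=
  ∫ t in (0 : ℝ)..1, u (x - h * t)

theorem norm_backwardAverage_le (hu : ∀ t ∈ Icc (0 : ℝ) 1, ‖u (x - h * t)‖ ≤ d) :
    ‖backwardAverage h u x‖ ≤ d := by
  have hu' (t : ℝ) (ht : t ∈ uIoc (0 : ℝ) 1) : ‖u (x - h * t)‖ ≤ d :=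
    hu t (Ioc_subset_Icc_self (uIoc_of_le (zero_le_one' ℝ) ▸ ht))
  simpa [backwardAverage] using intervalIntegral.norm_integral_le_of_norm_le_const hu'

theorem norm_backwardAverage_le_of_monotone (hh : 0 ≤ h) (hφ : Monotone φ)
    (hu : ∀ x, ‖u x‖ ≤ φ x) (x : ℝ) : ‖backwardAverage h u x‖ ≤ φ x :=
  norm_backwardAverage_le fun _ ht =>
    (hu _).trans (hφ (sub_le_self x (mul_nonneg hh ht.1)))

theorem norm_backwardAverage_sub_le (hu : Continuous u) (hv : Continuous v)
    (huv : ∀ t ∈ Icc (0 : ℝ) 1, ‖u (x - h * t) - v (y - h * t)‖ ≤ d) :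
    ‖backwardAverage h u x - backwardAverage h v y‖ ≤ d := by
  have hsub : backwardAverage h u x - backwardAverage h v y =
      backwardAverage h (fun z => u z - v (z + (y - x))) x := by
    rw [backwardAverage, backwardAverage, ← intervalIntegral.integral_sub
      (Continuous.intervalIntegrable (by fun_prop) _ _)
      (Continuous.intervalIntegrable (by fun_prop) _ _), backwardAverage]
    simp only [sub_add_sub_comm, add_comm]
    ring_nf
  rw [hsub]
  refine norm_backwardAverage_le fun t ht => ?_
  convert huv t ht using 4
  ring

theorem lipschitzWith_backwardAverage (hu : LipschitzWith K u) (h : ℝ) :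
    LipschitzWith K (backwardAverage h u) :=
  LipschitzWith.of_dist_le_mul fun x y => by
    rw [dist_eq_norm]
    refine norm_backwardAverage_sub_le hu.continuous hu.continuous fun t _ => ?_
    simpa [dist_eq_norm] using hu.dist_le_mul (x - h * t) (y - h * t)

theorem norm_sub_backwardAverage_le [CompleteSpace E] (hu : LipschitzWith K u) (hh : 0 ≤ h)
    (x : ℝ) : ‖u x - backwardAverage h u x‖ ≤ K * h := by
  have hconst : backwardAverage h (fun _ => u x) x = u x := by simp [backwardAverage]
  nth_rw 1 [← hconst]
  refine norm_backwardAverage_sub_le continuous_const hu.continuous fun t ht => ?_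
  calc ‖u x - u (x - h * t)‖ ≤ K * ‖x - (x - h * t)‖ := by
        simpa only [dist_eq_norm] using hu.dist_le_mul x (x - h * t)
    _ = K * (h * t) := by rw [sub_sub_cancel, Real.norm_of_nonneg (mul_nonneg hh ht.1)]
    _ ≤ K * h := by
        gcongr
        exact mul_le_of_le_one_right hh ht.2

theorem tendsto_backwardAverage {U : ℕ → ℝ → E} (hU : ∀ m, Continuous (U m)) {C : ℝ}
    (hC : ∀ m, ∀ t ∈ Icc (0 : ℝ) 1, ‖U m (x - h * t)‖ ≤ C)
    (hlim : ∀ y, Tendsto (fun m => U m y) atTop (nhds (u y))) :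
    Tendsto (fun m => backwardAverage h (U m) x) atTop (nhds (backwardAverage h u x)) := by
  refine intervalIntegral.tendsto_integral_filter_of_dominated_convergence (fun _ => C)
    (Eventually.of_forall fun m => ?_) (Eventually.of_forall fun m => ?_) (by simp)
    (Eventually.of_forall fun t _ => hlim _)
  · have hcont := hU m
    exact Continuous.aestronglyMeasurable (by fun_prop)
  · exact Eventually.of_forall fun t ht =>
      hC m t (Ioc_subset_Icc_self (uIoc_of_le (zero_le_one' ℝ) ▸ ht))

/-- The difference quotient of `u` over `[x - h, x]`. -/
noncomputable def backwardDiffQuot (h : ℝ) (u : ℝ → E) (x : ℝ) : E := h⁻¹ • (u x - u (x - h))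

theorem hasDerivAt_backwardAverage [CompleteSpace E] (hh : h ≠ 0) (hu : Continuous u) (x : ℝ) :
    HasDerivAt (backwardAverage h u) (backwardDiffQuot h u x) x := by
  have hprimitive : backwardAverage h u =
      fun x => h⁻¹ • ((∫ t in (0 : ℝ)..x, u t) - ∫ t in (0 : ℝ)..(x - h), u t) := by
    funext x
    rw [backwardAverage, intervalIntegral.integral_interval_sub_left
      (hu.intervalIntegrable _ _) (hu.intervalIntegrable _ _),
      intervalIntegral.integral_comp_sub_mul u hh, mul_zero, mul_one, sub_zero]
  rw [hprimitive]
  have hftc (y : ℝ) : HasDerivAt (fun x => ∫ t in (0 : ℝ)..x, u t) (u y) y :=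
    (hu.integral_hasStrictDerivAt 0 y).hasDerivAt
  exact ((hftc x).sub ((hftc (x - h)).comp_sub_const x h)).const_smul h⁻¹

theorem norm_backwardDiffQuot_le (hh : 0 ≤ h) (hφ : Monotone φ) (hu : ∀ x, ‖u x‖ ≤ φ x) (x : ℝ) :
    ‖backwardDiffQuot h u x‖ ≤ 2 * h⁻¹ * φ x := by
  rw [backwardDiffQuot, norm_smul, Real.norm_of_nonneg (inv_nonneg.2 hh), mul_comm 2, mul_assoc]
  refine mul_le_mul_of_nonneg_left ((norm_sub_le _ _).trans ?_) (inv_nonneg.2 hh)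
  rw [two_mul]
  exact add_le_add (hu x) ((hu _).trans (hφ (sub_le_self x hh)))

theorem hasDerivAt_backwardDiffQuot (hu : ∀ x, HasDerivAt u (v x) x) (h x : ℝ) :
    HasDerivAt (backwardDiffQuot h u) (backwardDiffQuot h v x) x :=
  ((hu x).sub ((hu (x - h)).comp_sub_const x h)).const_smul h⁻¹

/-- The difference quotients of steps `a 0, …, a (n - 1)`, applied successively to `u`. -/
noncomputable def iteratedDiffQuot (a : ℕ → ℝ) : ℕ → (ℝ → E) → ℝ → E
  | 0, u => u
  | n + 1, u => iteratedDiffQuot a n (backwardDiffQuot (a n) u)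

theorem norm_iteratedDiffQuot_le (ha : ∀ i, 0 ≤ a i) (n : ℕ) (hφ : Monotone φ)
    (hu : ∀ x, ‖u x‖ ≤ φ x) (x : ℝ) :
    ‖iteratedDiffQuot a n u x‖ ≤ (∏ i ∈ Finset.range n, 2 * (a i)⁻¹) * φ x := by
  induction n generalizing u φ with
  | zero => simpa [iteratedDiffQuot] using hu x
  | succ n ih =>
    rw [iteratedDiffQuot, Finset.prod_range_succ, mul_assoc]
    exact ih (hφ.const_mul (mul_nonneg zero_le_two (inv_nonneg.2 (ha n))))
      (norm_backwardDiffQuot_le (ha n) hφ hu)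

theorem hasDerivAt_iteratedDiffQuot (a : ℕ → ℝ) (n : ℕ) (hu : ∀ x, HasDerivAt u (v x) x) (x : ℝ) :
    HasDerivAt (iteratedDiffQuot a n u) (iteratedDiffQuot a n v x) x := by
  induction n generalizing u v with
  | zero => exact hu x
  | succ n ih => exact ih (hasDerivAt_backwardDiffQuot hu (a n))

/-- The means over intervals of lengths `a k, …, a (k + m - 1)`, applied successively to `g`. -/
noncomputable def iteratedAverage (a : ℕ → ℝ) (g : ℝ → E) : ℕ → ℕ → ℝ → E
  | 0, _ => g
  | m + 1, k => backwardAverage (a k) (iteratedAverage a g m (k + 1))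

theorem lipschitzWith_iteratedAverage (hg : LipschitzWith K g) (a : ℕ → ℝ) (m k : ℕ) :
    LipschitzWith K (iteratedAverage a g m k) := by
  induction m generalizing k with
  | zero => exact hg
  | succ m ih => exact lipschitzWith_backwardAverage (ih (k + 1)) (a k)

theorem norm_iteratedAverage_le (ha : ∀ i, 0 ≤ a i) (hφ : Monotone φ) (hg : ∀ x, ‖g x‖ ≤ φ x)
    (m k : ℕ) (x : ℝ) : ‖iteratedAverage a g m k x‖ ≤ φ x := by
  induction m generalizing k x with
  | zero => exact hg x
  | succ m ih => exact norm_backwardAverage_le_of_monotone (ha k) hφ (ih (k + 1)) x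

theorem norm_iteratedAverage_sub_succ_le [CompleteSpace E] (hg : LipschitzWith K g)
    (ha : ∀ i, 0 ≤ a i) (m k : ℕ) (x : ℝ) :
    ‖iteratedAverage a g m k x - iteratedAverage a g (m + 1) k x‖ ≤ K * a (k + m) := by
  induction m generalizing k x with
  | zero => exact norm_sub_backwardAverage_le hg (ha k) x
  | succ m ih =>
    refine norm_backwardAverage_sub_le (lipschitzWith_iteratedAverage hg a m _).continuous
      (lipschitzWith_iteratedAverage hg a (m + 1) _).continuous fun t _ => ?_
    simpa only [Nat.succ_add_eq_add_succ] using ih (k + 1) (x - a k * t)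

theorem exists_eq_backwardAverage [CompleteSpace E] (ha : ∀ i, 0 ≤ a i) (hsum : Summable a)
    (hg : LipschitzWith K g) (hφ : Monotone φ) (hgφ : ∀ x, ‖g x‖ ≤ φ x) :
    ∃ F : ℕ → ℝ → E, (∀ k, Continuous (F k)) ∧ (∀ k x, ‖F k x‖ ≤ φ x) ∧
      (∀ k, F k = backwardAverage (a k) (F (k + 1))) ∧ ∀ x, ‖F 0 x - g x‖ ≤ K * ∑' i, a i := by
  set H := iteratedAverage a g
  have hdist (k : ℕ) (x : ℝ) (m : ℕ) : dist (H m k x) (H (m + 1) k x) ≤ K * a (k + m) :=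
    dist_eq_norm (H m k x) _ ▸ norm_iteratedAverage_sub_succ_le hg ha m k x
  have hsum' (k : ℕ) : Summable fun m => K * a (k + m) :=
    (hsum.comp_injective (add_right_injective k)).mul_left _
  have hlim (k : ℕ) (x : ℝ) : ∃ l, Tendsto (fun m => H m k x) atTop (nhds l) :=
    cauchySeq_tendsto_of_complete (cauchySeq_of_dist_le_of_summable _ (hdist k x) (hsum' k))
  choose F hF using hlim
  have hcont (m k : ℕ) : Continuous (H m k) := (lipschitzWith_iteratedAverage hg a m k).continuous
  have hbound (m k : ℕ) (x : ℝ) : ‖H m k x‖ ≤ φ x := norm_iteratedAverage_le ha hφ hgφ m k x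
  refine ⟨F, fun k => ?_, fun k x => le_of_tendsto' (hF k x).norm fun m => hbound m k x,
    fun k => funext fun x => ?_, fun x => ?_⟩
  · refine LipschitzWith.continuous (K := K) (LipschitzWith.of_dist_le_mul fun x y => ?_)
    exact le_of_tendsto' ((hF k x).dist (hF k y)) fun m =>
      (lipschitzWith_iteratedAverage hg a m k).dist_le_mul x y
  · refine tendsto_nhds_unique ((tendsto_add_atTop_iff_nat 1).2 (hF k x)) ?_
    exact tendsto_backwardAverage (C := φ x) (fun m => hcont m (k + 1))
      (fun m t ht => (hbound _ _ _).trans (hφ (sub_le_self x (mul_nonneg (ha k) ht.1))))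
      (hF (k + 1))
  · have hdist₀ : dist (g x) (F 0 x) ≤ ∑' m, K * a (0 + m) :=
      dist_le_tsum_of_dist_le_of_tendsto₀ _ (hdist 0 x) (hsum' 0) (hF 0 x)
    simpa only [dist_eq_norm', zero_add, tsum_mul_left] using hdist₀

theorem exists_hasDerivAt_norm_le_prod [CompleteSpace E] (ha : ∀ i, 0 < a i) (hsum : Summable a)
    (hg : LipschitzWith K g) (hφ : Monotone φ) (hgφ : ∀ x, ‖g x‖ ≤ φ x) :
    ∃ G : ℕ → ℝ → E, (∀ n x, HasDerivAt (G n) (G (n + 1) x) x) ∧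
      (∀ n x, ‖G n x‖ ≤ (∏ i ∈ Finset.range n, 2 * (a i)⁻¹) * φ x) ∧
      ∀ x, ‖G 0 x - g x‖ ≤ K * ∑' i, a i := by
  have ha' (i : ℕ) : 0 ≤ a i := (ha i).le
  obtain ⟨F, hcont, hbound, hF, hclose⟩ := exists_eq_backwardAverage ha' hsum hg hφ hgφ
  have hderiv (n : ℕ) (x : ℝ) : HasDerivAt (F n) (backwardDiffQuot (a n) (F (n + 1)) x) x := by
    rw [hF n]
    exact hasDerivAt_backwardAverage (ha n).ne' (hcont (n + 1)) x
  exact ⟨fun n => iteratedDiffQuot a n (F n),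
    fun n => hasDerivAt_iteratedDiffQuot a n (hderiv n),
    fun n => norm_iteratedDiffQuot_le ha' n hφ (hbound n), hclose⟩

end Averaging

section DenjoyCarleman

variable {E : Type*} [NormedAddCommGroup E] [NormedSpace ℝ E] {s : Set ℝ} {M β : ℕ → ℝ}

-- The flat function is the limit of the successive means of the ramp `x ↦ max 0 (min (x - c) 1)`;
-- the means run over intervals to the left, so it vanishes on `Iic c` as the ramp does.
theorem exists_hasDerivAt_flat {c d : ℝ} (hcd : c < d) (hβ : ∀ i, 0 < β i)
    (hsum : Summable fun i => 1 / β i) :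
    ∃ G : ℕ → ℝ → ℝ, (∀ n x, HasDerivAt (G n) (G (n + 1) x) x) ∧ (∀ n, G n c = 0) ∧
      G 0 d ≠ 0 ∧ ∃ C > 0, ∀ n x, |G n x| ≤ C ^ n * ∏ i ∈ Finset.range n, β i := by
  set φ : ℝ → ℝ := fun x => max 0 (min (x - c) 1)
  have hφ_lip : LipschitzWith 1 φ :=
    ((IsometryEquiv.subRight c).isometry.lipschitz.min_const 1).const_max 0
  have hφ_mono : Monotone φ := fun x y hxy => by
    dsimp only [φ]
    gcongr
  have hφ_abs (x : ℝ) : ‖φ x‖ ≤ φ x := (Real.norm_of_nonneg (le_max_left _ _)).le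
  have hφ_le (x : ℝ) : φ x ≤ 1 := max_le zero_le_one (min_le_right _ _)
  have hφc : φ c = 0 := by simp [φ]
  have hφd : 0 < φ d := lt_max_of_lt_right (lt_min (sub_pos.2 hcd) one_pos)
  set T := ∑' i, 1 / β i
  have hT : 0 ≤ T := tsum_nonneg fun i => (one_div_pos.2 (hβ i)).le
  obtain ⟨ε, hε, hεT⟩ : ∃ ε > 0, ε * T < φ d := by
    refine ⟨φ d / (T + 1), by positivity, ?_⟩
    rw [div_mul_eq_mul_div, div_lt_iff₀ (by positivity)]
    exact mul_lt_mul_of_pos_left (lt_add_one T) hφd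
  obtain ⟨G, hderiv, hbound, hclose⟩ := exists_hasDerivAt_norm_le_prod
    (fun i => mul_pos hε (one_div_pos.2 (hβ i))) (hsum.mul_left ε) hφ_lip hφ_mono hφ_abs
  refine ⟨G, hderiv, fun n => norm_le_zero_iff.1 ?_, fun hzero => ?_, 2 / ε, by positivity,
    fun n x => ?_⟩
  · simpa [hφc] using hbound n c
  · have hcontra := hclose d
    rw [hzero, zero_sub, norm_neg, Real.norm_of_nonneg hφd.le, tsum_mul_left, NNReal.coe_one,
      one_mul] at hcontra
    exact hcontra.not_gt hεT
  · have hfactor (i : ℕ) : 2 * (ε * (1 / β i))⁻¹ = 2 / ε * β i := by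
      have := (hβ i).ne'
      field
    have hprod : 0 ≤ ∏ i ∈ Finset.range n, 2 / ε * β i :=
      Finset.prod_nonneg fun i _ => mul_nonneg (by positivity) (hβ i).le
    have hle := hbound n x
    simp only [hfactor] at hle
    refine (hle.trans (mul_le_of_le_one_right hprod (hφ_le x))).trans_eq ?_
    rw [Finset.prod_mul_distrib, Finset.prod_const, Finset.card_range]

theorem not_isQuasianalytic_of_summable [Nontrivial E] (hs : UniqueDiffOn ℝ s)
    (hs' : s.Nontrivial) (hβ : ∀ i, 0 < β i) {A : ℝ} (hA : 0 < A)
    (hle : ∀ n, ∏ i ∈ Finset.range n, β i ≤ A * M n) (hsum : Summable fun i => 1 / β i) :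
    ¬ IsQuasianalytic E s M := by
  obtain ⟨c, hc, d, hd, hcd⟩ := hs'.exists_lt
  obtain ⟨v, hv⟩ := exists_ne (0 : E)
  obtain ⟨G, hderiv, hflat, hne, C, hC, hbound⟩ := exists_hasDerivAt_flat hcd hβ hsum
  have hchain : IsDerivChain (fun n x => G n x • v) s := fun n x _ =>
    ((hderiv n x).smul_const v).hasDerivWithinAt
  have hmem : MemCarlemanClass s M (fun x => G 0 x • v) := by
    refine hchain.memCarlemanClass hs (mul_pos hA (norm_pos_iff.2 hv)) hC fun n x _ => ?_
    calc ‖G n x • v‖ = |G n x| * ‖v‖ := norm_smul _ _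
      _ ≤ C ^ n * (A * M n) * ‖v‖ := by
        gcongr
        exact (hbound n x).trans (mul_le_mul_of_nonneg_left (hle n) (by positivity))
      _ = A * ‖v‖ * C ^ n * M n := by ring
  intro hqa
  have hzero := hqa _ hmem c hc
    (fun n => by simpa [hflat] using hchain.iteratedDerivWithin_eq hs n hc) d hd
  exact smul_ne_zero hne hv hzero

end DenjoyCarleman

theorem stmt_2_general {E : Type*} [NormedAddCommGroup E] [NormedSpace ℝ E] [Nontrivial E]
    {s : Set ℝ} (hs : Convex ℝ s) (hs' : (interior s).Nonempty) {M : ℕ → ℝ} (hM : ∀ n, 0 < M n)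
    (hroot : Tendsto (fun n : ℕ => M n ^ (1 / (n : ℝ))) atTop atTop) :
    IsQuasianalytic E s M ↔ ¬ Summable fun n => 1 / infRoot M (n + 1) := by
  have hA : 0 < max 1 (M 0)⁻¹ := lt_max_of_lt_left one_pos
  have hnontrivial : s.Nontrivial :=
    have ⟨x, hx⟩ := hs'
    (infinite_of_mem_nhds x (mem_interior_iff_mem_nhds.1 hx)).nontrivial
  refine ⟨fun hqa hsum => not_isQuasianalytic_of_summable (uniqueDiffOn_convex hs hs')
    hnontrivial (fun i => infRoot_pos hM hroot) hA (prod_infRoot_le hM) hsum hqa, fun hdiv => ?_⟩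
  obtain ⟨ν, w, hν, hle, hcontact, hlt, hw, hmax⟩ := exists_logConvex_minorant hM hroot
  have hmono : Monotone ν := fun i j hij => hmax j i (hij.trans_lt (hlt j))
  exact isQuasianalytic_of_not_summable hs hs' (hM 0).le hν hcontact hlt hw hmax
    fun hsum => hdiv (summable_one_div_infRoot (hM 0) hν hmono hle hsum)

/-- The Denjoy–Carleman theorem: with `βₙ = inf_{k ≥ n, k ≥ 1} Mₖ^{1/k}`, the class
`C_M([a,b])` is quasi-analytic iff `∑ 1/βₙ` diverges. The hypothesis
`liminf Mₙ^{1/n} = ∞` is phrased as `Mₙ^{1/n} → ∞`. -/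
theorem stmt_2 (a b : ℝ) (hab : a < b) (M : ℕ → ℝ) (hMpos : ∀ n, 0 < M n)
    (hM0 : M 0 = 1)
    (hliminf : Filter.Tendsto (fun n : ℕ => (M n) ^ (1 / (n : ℝ)))
      Filter.atTop Filter.atTop)
    (β : ℕ → ℝ)
    (hβ : ∀ n : ℕ, β n = sInf {y : ℝ | ∃ k : ℕ, n ≤ k ∧ 1 ≤ k ∧ y = (M k) ^ (1 / (k : ℝ))}) :
    (∀ f : ℝ → ℝ, MemCM a b M f →
      ∀ c ∈ Icc a b, (∀ n : ℕ, iteratedDerivWithin n f (Icc a b) c = 0) →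
        ∀ x ∈ Icc a b, f x = 0)
    ↔ ¬ Summable (fun n : ℕ => 1 / β (n + 1)) := by
  obtain rfl : β = infRoot M := funext hβ
  exact stmt_2_general (E := ℝ) (convex_Icc a b) (by simpa [interior_Icc] using hab) hMpos hliminf
end

section
/- Let N = (N_n)_{n∈ℕ} be a log-convex sequence of positive real numbers with N_0 = 1. Then the series ∑_{n≥1} 1/N_n^{1/n} diverges if and only if the series ∑_{n≥1} N_{n-1}/N_n diverges. -/
/-!
Put `a n = N n / N (n + 1)`. Since `N 0 = 1`, the product `a 0 * ⋯ * a n` telescopes to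
`1 / N (n + 1)`, so the first series is that of the geometric means of `a`. Log-convexity says that
`a` is antitone, whence `a n` is at most the geometric mean of `a 0, …, a n`. Conversely, Carleman's
inequality bounds the sum of the geometric means by `e * ∑ a n`; it is proved by Pólya's method,
applying AM-GM to `carlemanWeight i * a i` instead of `a i`.
-/

open Finset

/-- The geometric mean of the `n + 1` initial terms `a 0, …, a n`. -/
noncomputable def initialGeomMean (a : ℕ → ℝ) (n : ℕ) : ℝ :=
  (∏ i ∈ range (n + 1), a i) ^ (1 / ((n : ℝ) + 1))

/-- The weights `(i + 2) ^ (i + 1) / (i + 1) ^ i` of Pólya's proof of Carleman's inequality, written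
so as to exhibit the factor `(1 + 1 / (i + 1)) ^ (i + 1) ≤ e`. They are chosen to make the geometric
mean of the first `n + 1` of them equal to `n + 2`. -/
noncomputable def carlemanWeight (i : ℕ) : ℝ :=
  ((i : ℝ) + 1) * (1 + ((i + 1 : ℕ) : ℝ)⁻¹) ^ (i + 1)

section GeomMean

variable {a b : ℕ → ℝ}

lemma initialGeomMean_nonneg (ha : ∀ n, 0 ≤ a n) (n : ℕ) : 0 ≤ initialGeomMean a n :=
  Real.rpow_nonneg (prod_nonneg fun i _ ↦ ha i) _

lemma initialGeomMean_mul (ha : ∀ n, 0 ≤ a n) (hb : ∀ n, 0 ≤ b n) (n : ℕ) :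
    initialGeomMean (fun i ↦ a i * b i) n = initialGeomMean a n * initialGeomMean b n := by
  rw [initialGeomMean, prod_mul_distrib,
    Real.mul_rpow (prod_nonneg fun i _ ↦ ha i) (prod_nonneg fun i _ ↦ hb i)]
  rfl

lemma initialGeomMean_le_arith_mean (ha : ∀ n, 0 ≤ a n) (n : ℕ) :
    initialGeomMean a n ≤ (∑ i ∈ range (n + 1), a i) / ((n : ℝ) + 1) := by
  have amgm := Real.geom_mean_le_arith_mean (range (n + 1)) (fun _ ↦ 1) a
    (fun _ _ ↦ zero_le_one) (by simp only [sum_const, card_range, nsmul_one]; positivity)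
    (fun i _ ↦ ha i)
  simpa [initialGeomMean] using amgm

lemma le_initialGeomMean_of_antitone (hanti : Antitone a) {n : ℕ} (ha : 0 ≤ a n) :
    a n ≤ initialGeomMean a n := by
  have pow_le_prod : a n ^ (n + 1) ≤ ∏ i ∈ range (n + 1), a i := by
    simpa only [prod_const, card_range] using
      prod_le_prod (fun _ _ ↦ ha) fun i hi ↦ hanti (mem_range_succ_iff.mp hi)
  calc a n = (a n ^ (n + 1)) ^ (1 / ((n : ℝ) + 1)) := by
        rw [one_div, ← Nat.cast_add_one, Real.pow_rpow_inv_natCast ha n.succ_ne_zero]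
    _ ≤ initialGeomMean a n :=
        Real.rpow_le_rpow (pow_nonneg ha _) pow_le_prod (by positivity)

end GeomMean

section Carleman

lemma carlemanWeight_nonneg (i : ℕ) : 0 ≤ carlemanWeight i := by
  unfold carlemanWeight
  positivity

lemma carlemanWeight_le (i : ℕ) : carlemanWeight i ≤ Real.exp 1 * ((i : ℝ) + 1) := by
  rw [carlemanWeight, mul_comm]
  exact mul_le_mul_of_nonneg_right Real.one_add_inv_pow_le_exp (by positivity)

lemma prod_range_carlemanWeight (n : ℕ) :
    ∏ i ∈ range n, carlemanWeight i = ((n : ℝ) + 1) ^ n := by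
  induction n with
  | zero => simp
  | succ n ih =>
    have one_add_inv : 1 + ((n + 1 : ℕ) : ℝ)⁻¹ = (((n + 1 : ℕ) : ℝ) + 1) / ((n : ℝ) + 1) := by
      rw [Nat.cast_add_one, add_div, div_self (by positivity), one_div]
    calc ∏ i ∈ range (n + 1), carlemanWeight i
        = ((n : ℝ) + 1) ^ (n + 1) * ((((n + 1 : ℕ) : ℝ) + 1) / ((n : ℝ) + 1)) ^ (n + 1) := by
          rw [prod_range_succ, ih, carlemanWeight, one_add_inv, ← mul_assoc, ← pow_succ]
      _ = (((n + 1 : ℕ) : ℝ) + 1) ^ (n + 1) := by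
          rw [← mul_pow, mul_div_cancel₀ _ (by positivity)]

lemma initialGeomMean_carlemanWeight (n : ℕ) :
    initialGeomMean carlemanWeight n = (n : ℝ) + 2 := by
  rw [initialGeomMean, prod_range_carlemanWeight, one_div, ← Nat.cast_add_one n,
    Real.pow_rpow_inv_natCast (by positivity) n.succ_ne_zero]
  push_cast
  ring

lemma initialGeomMean_le_sum_carlemanWeight_mul {a : ℕ → ℝ} (ha : ∀ n, 0 ≤ a n) (n : ℕ) :
    initialGeomMean a n ≤
      (∑ i ∈ range (n + 1), carlemanWeight i * a i) / (((n : ℝ) + 1) * ((n : ℝ) + 2)) := by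
  have amgm := initialGeomMean_le_arith_mean (fun i ↦ mul_nonneg (carlemanWeight_nonneg i) (ha i)) n
  rw [initialGeomMean_mul carlemanWeight_nonneg ha, initialGeomMean_carlemanWeight] at amgm
  rwa [← div_div, le_div_iff₀' (by positivity)]

-- Summation by parts with `1 / ((n + 1) * (n + 2)) = 1 / (n + 1) - 1 / (n + 2)`.
lemma sum_range_sum_range_div {K : Type*} [Field K] [CharZero K] (x : ℕ → K) (m : ℕ) :
    ∑ n ∈ range m, (∑ i ∈ range (n + 1), x i) / (((n : K) + 1) * ((n : K) + 2)) =
      ∑ i ∈ range m, x i / ((i : K) + 1) - (∑ i ∈ range m, x i) / ((m : K) + 1) := by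
  induction m with
  | zero => simp
  | succ m ih =>
    have add_one_ne_zero : (m : K) + 1 ≠ 0 := Nat.cast_add_one_ne_zero m
    have add_two_ne_zero : (m : K) + 2 ≠ 0 := mod_cast (m + 1).succ_ne_zero
    rw [sum_range_succ, ih, sum_range_succ x, sum_range_succ (fun i ↦ x i / ((i : K) + 1)),
      Nat.cast_add_one, add_assoc (m : K) 1 1, one_add_one_eq_two]
    field_simp
    ring

theorem carleman_inequality {a : ℕ → ℝ} (ha : ∀ n, 0 ≤ a n) (m : ℕ) :
    ∑ n ∈ range m, initialGeomMean a n ≤ Real.exp 1 * ∑ n ∈ range m, a n := by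
  have weighted_nonneg (i : ℕ) : 0 ≤ carlemanWeight i * a i :=
    mul_nonneg (carlemanWeight_nonneg i) (ha i)
  calc ∑ n ∈ range m, initialGeomMean a n
      ≤ ∑ n ∈ range m,
          (∑ i ∈ range (n + 1), carlemanWeight i * a i) / (((n : ℝ) + 1) * ((n : ℝ) + 2)) :=
        sum_le_sum fun n _ ↦ initialGeomMean_le_sum_carlemanWeight_mul ha n
    _ = ∑ i ∈ range m, carlemanWeight i * a i / ((i : ℝ) + 1) -
          (∑ i ∈ range m, carlemanWeight i * a i) / ((m : ℝ) + 1) :=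
        sum_range_sum_range_div _ m
    _ ≤ ∑ i ∈ range m, carlemanWeight i * a i / ((i : ℝ) + 1) :=
        sub_le_self _ (div_nonneg (sum_nonneg fun i _ ↦ weighted_nonneg i) (by positivity))
    _ ≤ ∑ i ∈ range m, Real.exp 1 * a i := by
        refine sum_le_sum fun i _ ↦ ?_
        rw [div_le_iff₀ (by positivity), mul_right_comm]
        exact mul_le_mul_of_nonneg_right (carlemanWeight_le i) (ha i)
    _ = Real.exp 1 * ∑ n ∈ range m, a n := (mul_sum ..).symm

lemma summable_initialGeomMean {a : ℕ → ℝ} (ha : ∀ n, 0 ≤ a n) (hsum : Summable a) :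
    Summable (initialGeomMean a) :=
  summable_of_sum_range_le (initialGeomMean_nonneg ha) fun m ↦
    (carleman_inequality ha m).trans <|
      mul_le_mul_of_nonneg_left (hsum.sum_le_tsum _ fun n _ ↦ ha n) (Real.exp_pos 1).le

theorem summable_initialGeomMean_iff_of_antitone {a : ℕ → ℝ} (hanti : Antitone a)
    (ha : ∀ n, 0 ≤ a n) : Summable (initialGeomMean a) ↔ Summable a :=
  ⟨.of_nonneg_of_le ha fun n ↦ le_initialGeomMean_of_antitone hanti (ha n),
    summable_initialGeomMean ha⟩

end Carleman

section ConsecutiveRatios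

lemma antitone_div_succ_of_sq_le {K : Type*} [Field K] [LinearOrder K] [IsStrictOrderedRing K]
    {u : ℕ → K} (hpos : ∀ n, 0 < u n) (hu : ∀ n, u (n + 1) ^ 2 ≤ u n * u (n + 2)) :
    Antitone fun n ↦ u n / u (n + 1) := by
  refine antitone_nat_of_succ_le fun n ↦ ?_
  rw [div_le_div_iff₀ (hpos _) (hpos _), ← sq]
  exact hu n

lemma prod_range_div_succ {K : Type*} [Field K] {u : ℕ → K} (hu : ∀ n, u n ≠ 0) (n : ℕ) :
    ∏ i ∈ range n, u i / u (i + 1) = u 0 / u n := by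
  induction n with
  | zero => simp [hu 0]
  | succ n ih => rw [prod_range_succ, ih, div_mul_div_cancel₀ (hu n)]

lemma initialGeomMean_div_succ {u : ℕ → ℝ} (hpos : ∀ n, 0 < u n) (n : ℕ) :
    initialGeomMean (fun i ↦ u i / u (i + 1)) n =
      u 0 ^ (1 / ((n : ℝ) + 1)) / u (n + 1) ^ (1 / ((n : ℝ) + 1)) := by
  rw [initialGeomMean, prod_range_div_succ fun i ↦ (hpos i).ne',
    Real.div_rpow (hpos 0).le (hpos _).le]

end ConsecutiveRatios

theorem stmt_5 (N : ℕ → ℝ) (hNpos : ∀ n, 0 < N n) (hN0 : N 0 = 1)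
    (hlogconvex : ∀ n : ℕ, 1 ≤ n → (N n) ^ 2 ≤ N (n - 1) * N (n + 1)) :
    (¬ Summable (fun n : ℕ => 1 / (N (n + 1)) ^ (1 / ((n : ℝ) + 1))))
      ↔ ¬ Summable (fun n : ℕ => N n / N (n + 1)) := by
  have ratio_nonneg (n : ℕ) : 0 ≤ N n / N (n + 1) := (div_pos (hNpos _) (hNpos _)).le
  have ratio_antitone : Antitone fun n ↦ N n / N (n + 1) :=
    antitone_div_succ_of_sq_le hNpos fun n ↦ hlogconvex (n + 1) n.succ_pos
  have geomMean_ratio : initialGeomMean (fun n ↦ N n / N (n + 1)) =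
      fun n : ℕ ↦ 1 / N (n + 1) ^ (1 / ((n : ℝ) + 1)) := by
    funext n
    rw [initialGeomMean_div_succ hNpos, hN0, Real.one_rpow]
  rw [not_iff_not, ← geomMean_ratio]
  exact summable_initialGeomMean_iff_of_antitone ratio_antitone ratio_nonneg
end

section
/- Let [a,b] ⊂ ℝ with a < b and let M = (M_n)_{n∈ℕ} be a log-convex sequence of positive real numbers with M_0 = 1 such that ∑_{n=0}^∞ M_n/M_{n+1} = ∞. Let f be an infinitely differentiable function on [a,b] with |f^(n)(t)| ≤ M_n for all n ∈ ℕ and all t ∈ [a,b]. If there exists t_0 ∈ [a,b] such that f^(n)(t_0) = 0 for all n ∈ ℕ, then f is identically zero on [a,b]. -/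
open Set

/-!
Bang's argument. Measure the jet `u j = f⁽ʲ⁾(t)` at a point `t` by the norm
`sup_j ‖u j‖ / (eʲ M_j)`. The bounds on the derivatives alone show that if this norm is at most
`e^{-(k+1)}` at `t`, then it is at most `e^{-k}` up to the distance `M_k / (e M_{k+1})` from `t`:
for `j ≤ k` one integrates downwards from `j = k + 1`, log-convexity controlling all the growth
rates by the `k`-th one, and for larger `j` the bound `M_j` itself is enough. At a flat point the
norm is `0`, so one may start from an arbitrarily small level `e^{-l}`. Since `∑ M_n / M_{n+1}`
diverges, climbing from level `e^{-l}` to level `e^{-k}` covers any given distance once `l` is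
large, for every `k`; hence the norm vanishes everywhere. In a normed space this is applied along
segments issuing from the flat point, parametrized by arc length.
-/

open Filter Topology

theorem monotone_succ_div_of_sq_le_mul {M : ℕ → ℝ} (hMpos : ∀ n, 0 < M n)
    (hM : ∀ n, M (n + 1) ^ 2 ≤ M n * M (n + 2)) : Monotone fun n ↦ M (n + 1) / M n := by
  refine monotone_nat_of_le_succ fun n ↦ ?_
  rw [div_le_div_iff₀ (hMpos n) (hMpos (n + 1))]
  linarith [hM n]

theorem exists_le_sum_Ico_of_not_summable {δ : ℕ → ℝ} (hδ : ∀ n, 0 ≤ δ n) (hdiv : ¬ Summable δ)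
    (k : ℕ) (r : ℝ) : ∃ l, k ≤ l ∧ r ≤ ∑ n ∈ Finset.Ico k l, δ n := by
  have hsum := (not_summable_iff_tendsto_nat_atTop_of_nonneg hδ).1 hdiv
  obtain ⟨l, hr, hkl⟩ := ((hsum.eventually_ge_atTop (r + ∑ n ∈ Finset.range k, δ n)).and
    (eventually_ge_atTop k)).exists
  refine ⟨l, hkl, ?_⟩
  rw [Finset.sum_Ico_eq_sub _ hkl]
  linarith

variable {E : Type*} [NormedAddCommGroup E]

/-- The jet `u` has Bang norm `sup_j ‖u j‖ / (exp j * M j)` at most `exp (-k)`; the supremum is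
avoided because it need not be finite. -/
def BangNormLE (M : ℕ → ℝ) (k : ℕ) (u : ℕ → E) : Prop :=
  ∀ j : ℕ, ‖u j‖ ≤ Real.exp (j - k) * M j

theorem eq_zero_of_forall_bangNormLE {M : ℕ → ℝ} {u : ℕ → E} (hu : ∀ k, BangNormLE M k u) :
    u = 0 := by
  ext j
  have hlim : Tendsto (fun k : ℕ ↦ Real.exp (j - k) * M j) atTop (𝓝 0) := by
    have hexp : Tendsto (fun k : ℕ ↦ Real.exp (j - k)) atTop (𝓝 0) :=
      Real.tendsto_exp_atBot.comp <| tendsto_atBot_add_const_left _ _ <|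
        tendsto_neg_atTop_atBot.comp tendsto_natCast_atTop_atTop
    simpa only [zero_mul] using hexp.mul_const (M j)
  exact norm_le_zero_iff.1 (ge_of_tendsto' hlim fun k ↦ hu k j)

variable [NormedSpace ℝ E]

theorem norm_le_mul_exp_of_norm_deriv_le {h h' : ℝ → E} {a b A c : ℝ}
    (hderiv : ∀ t ∈ Icc a b, HasDerivWithinAt h (h' t) (Icc a b) t) (ha : ‖h a‖ ≤ A)
    (hbound : ∀ t ∈ Ico a b, ‖h' t‖ ≤ A * (Real.exp (c * (t - a)) * c)) :
    ∀ t ∈ Icc a b, ‖h t‖ ≤ A * Real.exp (c * (t - a)) := by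
  refine image_norm_le_of_norm_deriv_right_le_deriv_boundary
    (fun t ht ↦ (hderiv t ht).continuousWithinAt)
    (fun t ht ↦ (hderiv t (Ico_subset_Icc_self ht)).mono_of_mem_nhdsWithin
      (Icc_mem_nhdsGE_of_mem ht)) ?_ (fun t ↦ ?_) hbound
  · simpa only [sub_self, mul_zero, Real.exp_zero, mul_one] using ha
  · simpa only [id, mul_one] using
      ((((hasDerivAt_id t).sub_const a).const_mul c).exp).const_mul A

/-- The functions `g n` are the successive derivatives of `g 0` on `s`, and they are bounded by the
weights `M n`: membership of `g 0` in the Denjoy–Carleman class of `M`, in a form which can be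
restricted to subsets of `s` and which does not refer to iterated derivatives. -/
structure CarlemanJetOn (M : ℕ → ℝ) (g : ℕ → ℝ → E) (s : Set ℝ) : Prop where
  hasDerivWithinAt : ∀ n, ∀ t ∈ s, HasDerivWithinAt (g n) (g (n + 1) t) s t
  norm_le : ∀ n, ∀ t ∈ s, ‖g n t‖ ≤ M n

namespace CarlemanJetOn

variable {M : ℕ → ℝ} {g : ℕ → ℝ → E} {a b : ℝ} {k l : ℕ}

theorem mono {s t : Set ℝ} (hg : CarlemanJetOn M g t) (hst : s ⊆ t) : CarlemanJetOn M g s where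
  hasDerivWithinAt n x hx := (hg.hasDerivWithinAt n x (hst hx)).mono hst
  norm_le n x hx := hg.norm_le n x (hst hx)

theorem norm_le_exp_mul_exp (hg : CarlemanJetOn M g (Icc a b)) (hMpos : ∀ n, 0 < M n)
    (hM : Monotone fun n ↦ M (n + 1) / M n) (ha : BangNormLE M (k + 1) (g · a))
    {j : ℕ} (hj : j ≤ k + 1) :
    ∀ t ∈ Icc a b, ‖g j t‖ ≤ Real.exp (j - (k + 1 : ℕ)) * M j *
      Real.exp (Real.exp 1 * (M (k + 1) / M k) * (t - a)) := by
  have hrate : 0 < Real.exp 1 * (M (k + 1) / M k) :=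
    mul_pos (Real.exp_pos 1) (div_pos (hMpos _) (hMpos _))
  set c := Real.exp 1 * (M (k + 1) / M k) with hc
  induction hj using Nat.decreasingInduction with
  | self =>
    intro t ht
    have hexp : 1 ≤ Real.exp (c * (t - a)) :=
      Real.one_le_exp (mul_nonneg hrate.le (sub_nonneg.2 ht.1))
    rw [sub_self, Real.exp_zero, one_mul]
    exact (hg.norm_le _ t ht).trans (le_mul_of_one_le_right (hMpos _).le hexp)
  | of_succ j hj ih =>
    refine norm_le_mul_exp_of_norm_deriv_le (hg.hasDerivWithinAt j) (ha j) fun t ht ↦ ?_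
    have hratio : M (j + 1) ≤ M (k + 1) / M k * M j :=
      (div_le_iff₀ (hMpos j)).1 (hM (Nat.lt_succ_iff.1 hj))
    have hshift : Real.exp ((j + 1 : ℕ) - (k + 1 : ℕ))
        = Real.exp 1 * Real.exp (j - (k + 1 : ℕ)) := by
      rw [← Real.exp_add]; push_cast; ring_nf
    calc ‖g (j + 1) t‖
        ≤ Real.exp ((j + 1 : ℕ) - (k + 1 : ℕ)) * M (j + 1) * Real.exp (c * (t - a)) :=
          ih t (Ico_subset_Icc_self ht)
      _ ≤ Real.exp 1 * Real.exp (j - (k + 1 : ℕ)) * (M (k + 1) / M k * M j) *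
            Real.exp (c * (t - a)) := by rw [hshift]; gcongr
      _ = Real.exp (j - (k + 1 : ℕ)) * M j * (Real.exp (c * (t - a)) * c) := by rw [hc]; ring

theorem bangNormLE_of_bangNormLE_succ (hg : CarlemanJetOn M g (Icc a b)) (hMpos : ∀ n, 0 < M n)
    (hM : Monotone fun n ↦ M (n + 1) / M n) (hab : a ≤ b)
    (hstep : Real.exp 1 * (b - a) ≤ M k / M (k + 1))
    (ha : BangNormLE M (k + 1) (g · a)) : BangNormLE M k (g · b) := by
  intro j
  have hMj := hMpos j
  have hb : b ∈ Icc a b := right_mem_Icc.2 hab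
  rcases le_total j k with hj | hj
  · have hgrowth : Real.exp 1 * (M (k + 1) / M k) * (b - a) ≤ 1 := by
      have hMk := hMpos k
      have hMk' := hMpos (k + 1)
      calc Real.exp 1 * (M (k + 1) / M k) * (b - a)
          = M (k + 1) / M k * (Real.exp 1 * (b - a)) := by ring
        _ ≤ M (k + 1) / M k * (M k / M (k + 1)) := by gcongr
        _ = 1 := by field_simp
    calc ‖g j b‖
        ≤ Real.exp (j - (k + 1 : ℕ)) * M j *
            Real.exp (Real.exp 1 * (M (k + 1) / M k) * (b - a)) :=
          hg.norm_le_exp_mul_exp hMpos hM ha (hj.trans k.le_succ) b hb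
      _ ≤ Real.exp (j - (k + 1 : ℕ)) * M j * Real.exp 1 := by gcongr
      _ = Real.exp (j - k) * M j := by
        rw [mul_right_comm, ← Real.exp_add]; push_cast; ring_nf
  · have hexp : 1 ≤ Real.exp ((j : ℝ) - k) :=
      Real.one_le_exp (sub_nonneg.2 (Nat.cast_le.2 hj))
    exact (hg.norm_le j b hb).trans (le_mul_of_one_le_left hMj.le hexp)

theorem bangNormLE_of_le_sum (hg : CarlemanJetOn M g (Icc a b)) (hMpos : ∀ n, 0 < M n)
    (hM : Monotone fun n ↦ M (n + 1) / M n) (hab : a ≤ b) (hkl : k ≤ l)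
    (hsum : Real.exp 1 * (b - a) ≤ ∑ n ∈ Finset.Ico k l, M n / M (n + 1))
    (ha : BangNormLE M l (g · a)) : BangNormLE M k (g · b) := by
  induction l, hkl using Nat.le_induction generalizing a with
  | base =>
    rw [Finset.Ico_self, Finset.sum_empty] at hsum
    have hba : b ≤ a := sub_nonpos.1 (nonpos_of_mul_nonpos_right hsum (Real.exp_pos 1))
    rwa [← hab.antisymm hba]
  | succ l hkl ih =>
    rw [Finset.sum_Ico_succ_top hkl] at hsum
    have hδ (n : ℕ) : 0 < M n / M (n + 1) := div_pos (hMpos _) (hMpos _)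
    set a' := min b (a + M l / M (l + 1) / Real.exp 1) with ha'
    have haa' : a ≤ a' := le_min hab (le_add_of_nonneg_right (div_pos (hδ l) (Real.exp_pos 1)).le)
    have ha'b : a' ≤ b := min_le_left _ _
    have hfirst : Real.exp 1 * (a' - a) ≤ M l / M (l + 1) := by
      rw [← le_div_iff₀' (Real.exp_pos 1), sub_le_iff_le_add']
      exact min_le_right _ _
    have hrest : Real.exp 1 * (b - a') ≤ ∑ n ∈ Finset.Ico k l, M n / M (n + 1) := by
      rcases min_choice b (a + M l / M (l + 1) / Real.exp 1) with h | h
      · rw [ha', h, sub_self, mul_zero]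
        exact Finset.sum_nonneg fun n _ ↦ (hδ n).le
      · rw [ha', h, ← sub_sub, mul_sub, mul_div_cancel₀ _ (Real.exp_ne_zero 1)]
        exact sub_le_iff_le_add.2 hsum
    exact ih (hg.mono (Icc_subset_Icc_left haa')) ha'b hrest
      ((hg.mono (Icc_subset_Icc_right ha'b)).bangNormLE_of_bangNormLE_succ hMpos hM haa' hfirst ha)

theorem eq_zero_right (hg : CarlemanJetOn M g (Icc a b)) (hMpos : ∀ n, 0 < M n)
    (hM : Monotone fun n ↦ M (n + 1) / M n) (hdiv : ¬ Summable fun n ↦ M n / M (n + 1))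
    (hab : a ≤ b) (ha : ∀ n, g n a = 0) (n : ℕ) : g n b = 0 := by
  refine congrFun (eq_zero_of_forall_bangNormLE (M := M) (u := (g · b)) fun k ↦ ?_) n
  obtain ⟨l, hkl, hl⟩ := exists_le_sum_Ico_of_not_summable
    (fun n ↦ (div_pos (hMpos n) (hMpos (n + 1))).le) hdiv k (Real.exp 1 * (b - a))
  refine hg.bangNormLE_of_le_sum hMpos hM hab hkl hl fun j ↦ ?_
  simpa only [ha, norm_zero] using mul_nonneg (Real.exp_pos _).le (hMpos j).le

end CarlemanJetOn

variable {V : Type*} [NormedAddCommGroup V] [NormedSpace ℝ V]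

theorem hasDerivWithinAt_iteratedFDerivWithin_line {f : V → E} {s : Set V} {I : Set ℝ} {x v : V}
    {m : WithTop ℕ∞} {n : ℕ} (hs : UniqueDiffOn ℝ s) (hf : ContDiffOn ℝ m f s) (hn : n < m)
    (hline : MapsTo (fun τ : ℝ ↦ x + τ • v) I s) {t : ℝ} (ht : t ∈ I) :
    HasDerivWithinAt (fun τ : ℝ ↦ iteratedFDerivWithin ℝ n f s (x + τ • v) fun _ ↦ v)
      (iteratedFDerivWithin ℝ (n + 1) f s (x + t • v) fun _ ↦ v) I t := by
  have hD : HasFDerivWithinAt (iteratedFDerivWithin ℝ n f s)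
      (fderivWithin ℝ (iteratedFDerivWithin ℝ n f s) s (x + t • v)) s (x + t • v) :=
    (hf.differentiableOn_iteratedFDerivWithin hn hs _ (hline ht)).hasFDerivWithinAt
  have hv : HasDerivWithinAt (fun τ : ℝ ↦ x + τ • v) v I t := by
    simpa only [id, one_smul] using (((hasDerivWithinAt_id t I).smul_const v).const_add x)
  exact (ContinuousMultilinearMap.apply ℝ (fun _ : Fin n ↦ V) E fun _ ↦ v).hasFDerivAt
    |>.comp_hasDerivWithinAt t (hD.comp_hasDerivWithinAt t hv hline)

theorem carlemanJetOn_iteratedFDerivWithin_line {M : ℕ → ℝ} {f : V → E} {s : Set V} {I : Set ℝ}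
    {x v : V} (hs : UniqueDiffOn ℝ s) (hf : ContDiffOn ℝ (⊤ : ℕ∞) f s)
    (hbound : ∀ n, ∀ y ∈ s, ‖iteratedFDerivWithin ℝ n f s y‖ ≤ M n) (hv : ‖v‖ ≤ 1)
    (hline : MapsTo (fun τ : ℝ ↦ x + τ • v) I s) :
    CarlemanJetOn M (fun n τ ↦ iteratedFDerivWithin ℝ n f s (x + τ • v) fun _ ↦ v) I where
  hasDerivWithinAt n _ ht := hasDerivWithinAt_iteratedFDerivWithin_line hs hf
    (mod_cast ENat.natCast_lt_top n) hline ht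
  norm_le n t ht := by
    have hunit : ‖fun _ : Fin n ↦ v‖ ≤ 1 := (pi_norm_const_le v).trans hv
    exact (ContinuousMultilinearMap.unit_le_opNorm _ hunit).trans (hbound n _ (hline ht))

theorem mapsTo_normalize_of_starConvex {s : Set V} {x y : V} (hs : StarConvex ℝ x s) (hy : y ∈ s) :
    MapsTo (fun τ : ℝ ↦ x + τ • NormedSpace.normalize (y - x)) (Icc 0 ‖y - x‖) s := by
  intro τ hτ
  have hmem : x + (τ / ‖y - x‖) • (y - x) ∈ s :=
    hs.add_smul_sub_mem hy (div_nonneg hτ.1 (norm_nonneg _))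
      (div_le_one_of_le₀ hτ.2 (norm_nonneg _))
  simpa only [NormedSpace.normalize, smul_smul, div_eq_mul_inv] using hmem

theorem stmt_10_general {M : ℕ → ℝ} (hMpos : ∀ n, 0 < M n)
    (hM : ∀ n, M (n + 1) ^ 2 ≤ M n * M (n + 2)) (hdiv : ¬ Summable fun n ↦ M n / M (n + 1))
    {f : V → E} {s : Set V} {x₀ : V} (hs : UniqueDiffOn ℝ s) (hstar : StarConvex ℝ x₀ s)
    (hf : ContDiffOn ℝ (⊤ : ℕ∞) f s)
    (hbound : ∀ n, ∀ x ∈ s, ‖iteratedFDerivWithin ℝ n f s x‖ ≤ M n)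
    (hzero : ∀ n, iteratedFDerivWithin ℝ n f s x₀ = 0) :
    ∀ x ∈ s, f x = 0 := by
  intro x hx
  have hunit : ‖NormedSpace.normalize (x - x₀)‖ ≤ 1 := by
    rw [NormedSpace.normalize, norm_smul, norm_inv, norm_norm]
    exact inv_mul_le_one
  have hjet := carlemanJetOn_iteratedFDerivWithin_line hs hf hbound hunit
    (mapsTo_normalize_of_starConvex hstar hx)
  have hend := hjet.eq_zero_right hMpos (monotone_succ_div_of_sq_le_mul hMpos hM) hdiv
    (norm_nonneg _) (fun n ↦ by simp [hzero]) 0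
  simpa using hend

theorem stmt_10 (a b : ℝ) (hab : a < b) (M : ℕ → ℝ) (hMpos : ∀ n, 0 < M n)
    (hM0 : M 0 = 1)
    (hlogconvex : ∀ n : ℕ, 1 ≤ n → (M n) ^ 2 ≤ M (n - 1) * M (n + 1))
    (hdiv : ¬ Summable (fun n : ℕ => M n / M (n + 1)))
    (f : ℝ → ℝ) (hf : ContDiffOn ℝ (⊤ : ℕ∞) f (Icc a b))
    (hbound : ∀ n : ℕ, ∀ t ∈ Icc a b, |iteratedDerivWithin n f (Icc a b) t| ≤ M n)
    (t₀ : ℝ) (ht₀ : t₀ ∈ Icc a b)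
    (hzero : ∀ n : ℕ, iteratedDerivWithin n f (Icc a b) t₀ = 0) :
    ∀ x ∈ Icc a b, f x = 0 :=
  stmt_10_general hMpos (fun n ↦ hlogconvex (n + 1) n.succ_pos) hdiv (uniqueDiffOn_Icc hab)
    ((convex_Icc a b).starConvex ht₀) hf
    (fun n t ht ↦ norm_iteratedFDerivWithin_eq_norm_iteratedDerivWithin.trans_le (hbound n t ht))
    fun n ↦ norm_eq_zero.1 <| norm_iteratedFDerivWithin_eq_norm_iteratedDerivWithin.trans <|
      norm_eq_zero.2 (hzero n)
end

section
/- (Gontcharoff) Let [a,b] ⊂ ℝ with a < b and let f be a real-analytic function on [a,b]. Let (x_n)_{n∈ℕ} be a sequence of points of [a,b] such that the series ∑_{n=1}^∞ |x_{n-1} − x_n| converges. If f^(n)(x_n) = 0 for all n ∈ ℕ, then f is identically zero on [a,b]. -/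
open Set

/-!
Integrating `f^(N+k)` back `k` times, each time from the zero `x_n` of `f^(n)`, bounds `f^(N)(y)` by
`sup |f^(N+k)| * (|y - x_N| + ∑_{n ≥ N} |x_n - x_{n+1}|)^k / k!`. Near the limit `l` of the sequence
the Cauchy estimates bound the supremum by `C (N+k)! / r^(N+k)`, with `C`, `r` independent of `N`.
Once `N` is so large that `x_N` is close to `l` and the tail of the series is small, the bound tends
to `0` as `k → ∞`, so `f^(N)` vanishes near `l` and hence, by the identity theorem, everywhere.
Applying the first estimate once more, now to the `N` derivatives below `f^(N)` with supremum `0`,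
gives `f = 0`.
-/

open Filter Topology
open scoped Nat NNReal ENNReal

section MeanValue

variable {𝕜 E : Type*} [RCLike 𝕜] [NormedAddCommGroup E] [NormedSpace 𝕜 E]

theorem norm_image_sub_le_of_norm_hasDerivWithinAt_le_radial {s : Set 𝕜} (hs : Convex ℝ s)
    {f f' : 𝕜 → E} (hf : ∀ z ∈ s, HasDerivWithinAt f (f' z) s z) {B B' : ℝ → ℝ}
    (hB : ∀ t, HasDerivAt B (B' t) t) {x : 𝕜} (bound : ∀ z ∈ s, ‖f' z‖ ≤ B' ‖z - x‖)
    (hx : x ∈ s) {y : 𝕜} (hy : y ∈ s) :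
    ‖f y - f x‖ ≤ B ‖y - x‖ - B 0 := by
  let : NormedSpace ℝ E := NormedSpace.restrictScalars ℝ 𝕜 E
  let γ : ℝ → 𝕜 := AffineMap.lineMap (k := ℝ) x y
  have hγs : MapsTo γ (Icc 0 1) s := fun t ht => hs.lineMap_mem hx hy ht
  have hγ_dist : ∀ t ∈ Icc (0 : ℝ) 1, ‖γ t - x‖ = t * ‖y - x‖ := fun t ht => by
    simp [γ, AffineMap.lineMap_apply, norm_smul, abs_of_nonneg ht.1]
  have hfγ : ∀ t ∈ Icc (0 : ℝ) 1,
      HasDerivWithinAt (fun t => f (γ t) - f x) ((y - x) • f' (γ t)) (Icc 0 1) t := fun t ht =>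
    ((hf _ (hγs ht)).scomp t AffineMap.hasDerivWithinAt_lineMap hγs).sub_const _
  have hBγ : ∀ t, HasDerivAt (fun t => B (t * ‖y - x‖) - B 0) (B' (t * ‖y - x‖) * ‖y - x‖) t :=
    fun t => ((hB _).comp t (hasDerivAt_mul_const _)).sub_const _
  have h_le := image_norm_le_of_norm_deriv_right_le_deriv_boundary
    (fun t ht => (hfγ t ht).continuousWithinAt)
    (fun t ht => (hfγ t (Ico_subset_Icc_self ht)).mono_of_mem_nhdsWithin
      (Icc_mem_nhdsGE_of_mem ht))
    (by simp [γ]) hBγ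
    (fun t ht => by
      have ht' := Ico_subset_Icc_self ht
      rw [norm_smul, mul_comm, ← hγ_dist t ht']
      gcongr
      exact bound _ (hγs ht'))
    (right_mem_Icc.2 zero_le_one)
  simpa [γ] using h_le

/-- Integrating from the zero `x n` of `F n` turns a bound in terms of the distance to `x (n + 1)`
into one in terms of the distance to `x n`, at the cost of the step `‖x n - x (n + 1)‖`. -/
theorem norm_le_of_hasDerivWithinAt_succ_of_apply_eq_zero {s : Set 𝕜} (hs : Convex ℝ s) {M : ℝ}
    (k : ℕ) {F : ℕ → 𝕜 → E} (hF : ∀ n < k, ∀ z ∈ s, HasDerivWithinAt (F n) (F (n + 1) z) s z)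
    {x : ℕ → 𝕜} (hxs : ∀ n < k, x n ∈ s) (hFx : ∀ n < k, F n (x n) = 0)
    (hM : ∀ z ∈ s, ‖F k z‖ ≤ M) {y : 𝕜} (hy : y ∈ s) :
    ‖F 0 y‖ ≤ M * (‖y - x 0‖ + ∑ i ∈ Finset.range k, ‖x i - x (i + 1)‖) ^ k / k ! := by
  induction k generalizing F x y with
  | zero => simpa using hM y hy
  | succ k ih =>
    have hM0 : 0 ≤ M := (norm_nonneg _).trans (hM y hy)
    set c := ∑ i ∈ Finset.range (k + 1), ‖x i - x (i + 1)‖ with hc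
    have : 0 ≤ c := Finset.sum_nonneg fun _ _ => norm_nonneg _
    have hF1 : ∀ z ∈ s, ‖F 1 z‖ ≤ M * (‖z - x 0‖ + c) ^ k / k ! := fun z hz => by
      refine (ih (F := fun n => F (n + 1)) (x := fun n => x (n + 1))
        (fun n hn => hF _ (by lia)) (fun n hn => hxs _ (by lia)) (fun n hn => hFx _ (by lia))
        hM hz).trans ?_
      have h_step : ‖z - x 1‖ + ∑ i ∈ Finset.range k, ‖x (i + 1) - x (i + 1 + 1)‖ ≤
          ‖z - x 0‖ + c := by
        rw [hc, Finset.sum_range_succ']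
        linarith [norm_sub_le_norm_sub_add_norm_sub z (x 0) (x (0 + 1))]
      gcongr
    have hB : ∀ t : ℝ, HasDerivAt (fun t => M * (t + c) ^ (k + 1) / (k + 1)!)
        (M * (t + c) ^ k / k !) t := fun t => by
      have h_pow := ((hasDerivAt_id t).add_const c).pow (k + 1)
      refine ((h_pow.const_mul M).div_const _).congr_deriv ?_
      simp only [id_eq, Nat.factorial_succ]
      push_cast
      field_simp
    have h_le := norm_image_sub_le_of_norm_hasDerivWithinAt_le_radial hs (hF 0 k.succ_pos) hB hF1
      (hxs 0 k.succ_pos) hy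
    rw [hFx 0 k.succ_pos, sub_zero] at h_le
    exact h_le.trans (sub_le_self _ (by positivity))

end MeanValue

theorem eventually_forall_sum_range_add_le {u : ℕ → ℝ} (hu : Summable u) (hu0 : ∀ n, 0 ≤ u n)
    {ε : ℝ} (hε : 0 < ε) : ∀ᶠ N in atTop, ∀ k, ∑ i ∈ Finset.range k, u (N + i) ≤ ε := by
  filter_upwards [(tendsto_sum_nat_add u).eventually_le_const hε] with N hN k
  simp only [add_comm N]
  exact (((summable_nat_add_iff N).2 hu).sum_le_tsum _ fun _ _ => hu0 _).trans hN

theorem tendsto_add_factorial_div_pow_mul_pow_div_factorial (N : ℕ) {δ r : ℝ} (h : |δ| < |r|) :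
    Tendsto (fun k : ℕ => (N + k)! / r ^ (N + k) * δ ^ k / k !) atTop (𝓝 0) := by
  have hr : r ≠ 0 := abs_pos.1 ((abs_nonneg δ).trans_lt h)
  have hq : ‖δ / r‖ < 1 := by
    rwa [Real.norm_eq_abs, abs_div, div_lt_one (abs_pos.2 hr)]
  have h_lim := ((summable_choose_mul_geometric_of_norm_lt_one N hq).tendsto_atTop_zero).const_mul
    (N ! / r ^ N)
  rw [mul_zero] at h_lim
  refine h_lim.congr fun k => ?_
  rw [← Nat.add_choose_mul_factorial_mul_factorial N k, add_comm k N, Nat.choose_symm_add, pow_add,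
    div_pow]
  push_cast
  field_simp

section Vanishing

variable {𝕜 E : Type*} [RCLike 𝕜] [NormedAddCommGroup E] [NormedSpace 𝕜 E]

theorem eq_zero_of_hasDerivWithinAt_succ_of_norm_le_factorial {s : Set 𝕜} (hs : Convex ℝ s)
    {F : ℕ → 𝕜 → E} (hF : ∀ n, ∀ z ∈ s, HasDerivWithinAt (F n) (F (n + 1) z) s z)
    {x : ℕ → 𝕜} (hxs : ∀ n, x n ∈ s) (hFx : ∀ n, F n (x n) = 0) {N : ℕ} {C δ r : ℝ}
    (hFC : ∀ n, ∀ z ∈ s, ‖F n z‖ ≤ C * ((N + n)! / r ^ (N + n))) {y : 𝕜} (hy : y ∈ s)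
    (hδ : ∀ k, ‖y - x 0‖ + ∑ i ∈ Finset.range k, ‖x i - x (i + 1)‖ ≤ δ) (hδr : δ < r) :
    F 0 y = 0 := by
  have hδ0 : 0 ≤ δ := le_trans (by positivity) (hδ 0)
  have h_le : ∀ k : ℕ, ‖F 0 y‖ ≤ C * ((N + k)! / r ^ (N + k) * δ ^ k / k !) := fun k => by
    have hM0 := (norm_nonneg _).trans (hFC k y hy)
    calc ‖F 0 y‖
        ≤ C * ((N + k)! / r ^ (N + k)) *
          (‖y - x 0‖ + ∑ i ∈ Finset.range k, ‖x i - x (i + 1)‖) ^ k / k ! :=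
          norm_le_of_hasDerivWithinAt_succ_of_apply_eq_zero hs k (fun n _ => hF n)
            (fun n _ => hxs n) (fun n _ => hFx n) (hFC k) hy
      _ ≤ C * ((N + k)! / r ^ (N + k)) * δ ^ k / k ! := by gcongr; exact hδ k
      _ = C * ((N + k)! / r ^ (N + k) * δ ^ k / k !) := by ring
  have hδr' : |δ| < |r| := (abs_of_nonneg hδ0).trans_lt (hδr.trans_le (le_abs_self r))
  have h_lim := (tendsto_add_factorial_div_pow_mul_pow_div_factorial N hδr').const_mul C
  rw [mul_zero] at h_lim
  exact norm_le_zero_iff.1 (ge_of_tendsto' h_lim h_le)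

end Vanishing

section CauchyEstimates

variable {𝕜 E F : Type*} [NontriviallyNormedField 𝕜] [NormedAddCommGroup E] [NormedSpace 𝕜 E]
  [NormedAddCommGroup F] [NormedSpace 𝕜 F]

theorem exists_nnnorm_changeOrigin_mul_pow_le (p : FormalMultilinearSeries 𝕜 E F)
    {ρ r : ℝ≥0} (h : (ρ + r : ℝ≥0∞) < p.radius) :
    ∃ C : ℝ≥0, ∀ x : E, ‖x‖₊ ≤ ρ → ∀ k, ‖p.changeOrigin x k‖₊ * r ^ k ≤ C := by
  let u : (Σ k l : ℕ, { s : Finset (Fin (k + l)) // s.card = l }) → ℝ≥0 :=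
    fun s => ‖p (s.1 + s.2.1)‖₊ * ρ ^ s.2.1 * r ^ s.1
  have hu : Summable u := p.changeOriginSeries_summable_aux₁ h
  have hρ : (ρ : ℝ≥0∞) < p.radius := le_self_add.trans_lt h
  refine ⟨∑' s, u s, fun x hx k => ?_⟩
  calc ‖p.changeOrigin x k‖₊ * r ^ k
      ≤ (∑' s : Σ l : ℕ, { s : Finset (Fin (k + l)) // s.card = l },
          ‖p (k + s.1)‖₊ * ‖x‖₊ ^ s.1) * r ^ k := by
        gcongr
        exact p.nnnorm_changeOrigin_le k ((ENNReal.coe_le_coe.2 hx).trans_lt hρ)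
    _ ≤ (∑' s : Σ l : ℕ, { s : Finset (Fin (k + l)) // s.card = l },
          ‖p (k + s.1)‖₊ * ρ ^ s.1) * r ^ k := by
        have h_sum := p.changeOriginSeries_summable_aux₂ hρ k
        gcongr
        exact NNReal.summable_of_le (fun s => by gcongr) h_sum
    _ = ∑' s, u ⟨k, s⟩ := (NNReal.tsum_mul_right _ _).symm
    _ ≤ ∑' s, u s := NNReal.tsum_comp_le_tsum_of_inj hu sigma_mk_injective

theorem norm_iteratedFDeriv_le_factorial_mul_norm [CompleteSpace F] {f : E → F}
    {p : FormalMultilinearSeries 𝕜 E F} {x : E} {r : ℝ≥0∞} (hf : HasFPowerSeriesOnBall f p x r)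
    (n : ℕ) : ‖iteratedFDeriv 𝕜 n f x‖ ≤ n ! * ‖p n‖ := by
  refine ContinuousMultilinearMap.opNorm_le_bound (by positivity) fun v => ?_
  rw [hf.iteratedFDeriv_eq_sum_of_completeSpace]
  calc ‖∑ σ : Equiv.Perm (Fin n), p n fun i => v (σ i)‖
      ≤ ∑ _ : Equiv.Perm (Fin n), ‖p n‖ * ∏ i, ‖v i‖ := by
        refine norm_sum_le_of_le _ fun σ _ => ((p n).le_opNorm _).trans_eq ?_
        rw [Equiv.prod_comp σ fun i => ‖v i‖]
    _ = n ! * ‖p n‖ * ∏ i, ‖v i‖ := by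
        simp [Fintype.card_perm, mul_assoc]

theorem exists_eventually_norm_iteratedFDeriv_le [CompleteSpace F] {f : E → F} {x : E}
    (hf : AnalyticAt 𝕜 f x) :
    ∃ C r : ℝ, 0 < r ∧ ∀ᶠ y in 𝓝 x, ∀ n, ‖iteratedFDeriv 𝕜 n f y‖ ≤ C * (n ! / r ^ n) := by
  obtain ⟨p, R, hp⟩ := hf
  obtain ⟨r, hr_pos, hrR⟩ := ENNReal.lt_iff_exists_nnreal_btwn.1 hp.r_pos
  have hr0 : 0 < r := ENNReal.coe_pos.1 hr_pos
  obtain ⟨C, hC⟩ := exists_nnnorm_changeOrigin_mul_pow_le p (ρ := r / 2) (r := r / 2) <| by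
    rw [← ENNReal.coe_add, add_halves]
    exact hrR.trans_le hp.r_le
  refine ⟨C, (r / 2 : ℝ≥0), by positivity, ?_⟩
  filter_upwards [Metric.closedBall_mem_nhds x (NNReal.coe_pos.2 (half_pos hr0))] with y hy n
  have hyx : ‖y - x‖₊ ≤ r / 2 := by rwa [mem_closedBall_iff_norm] at hy
  have hpy : HasFPowerSeriesOnBall f (p.changeOrigin (y - x)) y (R - ‖y - x‖₊) := by
    simpa only [add_sub_cancel] using
      hp.changeOrigin ((ENNReal.coe_le_coe.2 (hyx.trans (half_le_self hr0.le))).trans_lt hrR)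
  have hCn : ‖p.changeOrigin (y - x) n‖ * (r / 2 : ℝ≥0) ^ n ≤ C := mod_cast hC _ hyx n
  calc ‖iteratedFDeriv 𝕜 n f y‖
      ≤ n ! * ‖p.changeOrigin (y - x) n‖ := norm_iteratedFDeriv_le_factorial_mul_norm hpy n
    _ ≤ n ! * (C / (r / 2 : ℝ≥0) ^ n) := by
        gcongr
        rwa [le_div_iff₀ (by positivity)]
    _ = C * (n ! / (r / 2 : ℝ≥0) ^ n) := by ring

theorem exists_eventually_norm_iteratedDerivWithin_le [CompleteSpace F] {f : 𝕜 → F} {s : Set 𝕜}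
    (hs : UniqueDiffOn 𝕜 s) {x : 𝕜} (hf : AnalyticWithinAt 𝕜 f s x) :
    ∃ C r : ℝ, 0 < r ∧
      ∀ᶠ y in 𝓝[s] x, ∀ n, ‖iteratedDerivWithin n f s y‖ ≤ C * (n ! / r ^ n) := by
  obtain ⟨g, -, hfg, hg⟩ := hf.exists_analyticAt
  obtain ⟨C, r, hr, hC⟩ := exists_eventually_norm_iteratedFDeriv_le hg
  refine ⟨C, r, hr, ?_⟩
  filter_upwards [self_mem_nhdsWithin, nhdsWithin_le_nhds hC,
    nhdsWithin_le_nhds hg.eventually_analyticAt] with y hys hCy hgy n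
  rw [iteratedDerivWithin_congr (hfg.mono (subset_insert _ _)) hys,
    iteratedDerivWithin_eq_iteratedDeriv hs hgy.contDiffAt hys,
    ← norm_iteratedFDeriv_eq_norm_iteratedDeriv]
  exact hCy n

end CauchyEstimates

section AnalyticOn

variable {𝕜 E : Type*} [NontriviallyNormedField 𝕜] [NormedAddCommGroup E] [NormedSpace 𝕜 E]
  {f : 𝕜 → E} {s : Set 𝕜}

theorem analyticOn_iteratedDerivWithin (hf : AnalyticOn 𝕜 f s) (hs : UniqueDiffOn 𝕜 s) (n : ℕ) :
    AnalyticOn 𝕜 (iteratedDerivWithin n f s) s :=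
  (ContinuousMultilinearMap.apply 𝕜 (fun _ : Fin n => 𝕜) E fun _ => 1).comp_analyticOn
    (hf.iteratedFDerivWithin hs n)

theorem hasDerivWithinAt_iteratedDerivWithin (hf : AnalyticOn 𝕜 f s) (hs : UniqueDiffOn 𝕜 s)
    (n : ℕ) {z : 𝕜} (hz : z ∈ s) :
    HasDerivWithinAt (iteratedDerivWithin n f s) (iteratedDerivWithin (n + 1) f s z) s z := by
  rw [iteratedDerivWithin_succ]
  exact ((analyticOn_iteratedDerivWithin hf hs n).differentiableOn z hz).hasDerivWithinAt

theorem eventually_eq_zero_or_eventually_ne_zero_of_analyticWithinAt [CompleteSpace E] {x : 𝕜}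
    (hf : AnalyticWithinAt 𝕜 f s x) :
    (∀ᶠ z in 𝓝[s] x, f z = 0) ∨ ∀ᶠ z in 𝓝[s \ {x}] x, f z ≠ 0 := by
  obtain ⟨g, -, hfg, hg⟩ := hf.exists_analyticAt
  have hfg : EqOn f g s := hfg.mono (subset_insert _ _)
  refine hg.eventually_eq_zero_or_eventually_ne_zero.imp (fun hg0 => ?_) fun hg0 => ?_
  · filter_upwards [self_mem_nhdsWithin, nhdsWithin_le_nhds hg0] with z hz hgz
    rwa [hfg hz]
  · filter_upwards [self_mem_nhdsWithin, nhdsWithin_mono x (fun z hz => hz.2) hg0] with z hz hgz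
    rwa [hfg hz.1]

theorem eqOn_zero_of_analyticOn_of_isPreconnected [CompleteSpace E] (hf : AnalyticOn 𝕜 f s)
    (hs : IsPreconnected s) {z : 𝕜} (hz : z ∈ s) (hfz : f =ᶠ[𝓝[s] z] 0) : EqOn f 0 s := by
  rcases s.subsingleton_or_nontrivial with h_sub | h_nontriv
  · exact fun y hy => h_sub hz hy ▸ hfz.self_of_nhdsWithin hz
  have h_locally_const : ∀ x ∈ s, ∀ᶠ y in 𝓝[s] x, (f =ᶠ[𝓝[s] x] 0 ↔ f =ᶠ[𝓝[s] y] 0) := by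
    intro x hx
    rcases eventually_eq_zero_or_eventually_ne_zero_of_analyticWithinAt (hf x hx) with hf0 | hf0
    · filter_upwards [eventually_eventually_nhdsWithin.2 hf0] with y hfy
      exact iff_of_true hf0 hfy
    · have h_acc : (𝓝[s \ {x}] x).NeBot :=
        accPt_principal_iff_nhdsWithin.1 (hs.preperfect_of_nontrivial h_nontriv x hx)
      have hfx : ¬f =ᶠ[𝓝[s] x] 0 := fun hfx =>
        let ⟨_, hne, heq⟩ := (hf0.and (nhdsWithin_mono x sdiff_subset hfx)).exists
        hne heq
      rw [sdiff_eq, nhdsWithin_inter', eventually_inf_principal] at hf0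
      filter_upwards [self_mem_nhdsWithin, hf0] with y hys hfy
      rcases eq_or_ne y x with rfl | hyx
      · rfl
      · exact iff_of_false hfx fun hfy0 => hfy hyx (hfy0.self_of_nhdsWithin hys)
  intro y hy
  have h_iff := hs.induction₂ (fun x y => f =ᶠ[𝓝[s] x] 0 ↔ f =ᶠ[𝓝[s] y] 0) h_locally_const
    (fun _ _ _ _ _ _ => Iff.trans) (fun _ _ _ _ => Iff.symm) hz hy
  exact (h_iff.1 hfz).self_of_nhdsWithin hy

end AnalyticOn

section Gontcharoff

variable {𝕜 E : Type*} [RCLike 𝕜] [NormedAddCommGroup E] [NormedSpace 𝕜 E] [CompleteSpace E]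
  {f : 𝕜 → E} {s : Set 𝕜} {x : ℕ → 𝕜}

theorem exists_iteratedDerivWithin_eventuallyEq_zero (hs : Convex ℝ s) (hu : UniqueDiffOn 𝕜 s)
    (hf : AnalyticOn 𝕜 f s) (hxs : ∀ n, x n ∈ s) (hx : Summable fun n => ‖x n - x (n + 1)‖)
    (hfx : ∀ n, iteratedDerivWithin n f s (x n) = 0) {l : 𝕜} (hl : l ∈ s)
    (hxl : Tendsto x atTop (𝓝 l)) :
    ∃ N, iteratedDerivWithin N f s =ᶠ[𝓝[s] l] 0 := by
  obtain ⟨C, r, hr, hC⟩ := exists_eventually_norm_iteratedDerivWithin_le hu (hf l hl)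
  obtain ⟨ε, hε, hεC⟩ := Metric.mem_nhdsWithin_iff.1 hC
  set η := min ε (r / 8)
  have hη : 0 < η := by positivity
  set J := Metric.ball l η ∩ s
  have hJ : Convex ℝ J := (convex_ball l η).inter hs
  have hJC : ∀ n, ∀ z ∈ J, ‖iteratedDerivWithin n f s z‖ ≤ C * (n ! / r ^ n) := fun n z hz =>
    hεC ⟨Metric.ball_subset_ball (min_le_left _ _) hz.1, hz.2⟩ n
  obtain ⟨N, hxN, hN⟩ := ((eventually_forall_ge_atTop.2
    (hxl.eventually (Metric.ball_mem_nhds l hη))).and (eventually_forall_sum_range_add_le hx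
      (fun n => norm_nonneg _) (by positivity : 0 < r / 4))).exists
  have hxJ : ∀ n, x (N + n) ∈ J := fun n => ⟨hxN _ (Nat.le_add_right N n), hxs _⟩
  refine ⟨N, ?_⟩
  filter_upwards [inter_mem_nhdsWithin s (Metric.ball_mem_nhds l hη)] with y hy
  have hyx : ‖y - x N‖ ≤ r / 4 := by
    rw [← dist_eq_norm]
    have hyl : dist y l < η := hy.2
    have hxl : dist (x N) l < η := hxN N le_rfl
    linarith [dist_triangle_right y (x N) l, min_le_right ε (r / 8)]
  exact eq_zero_of_hasDerivWithinAt_succ_of_norm_le_factorial hJ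
    (F := fun n => iteratedDerivWithin (N + n) f s) (x := fun n => x (N + n))
    (fun n z hz => (hasDerivWithinAt_iteratedDerivWithin hf hu _ hz.2).mono inter_subset_right)
    hxJ (fun n => hfx _) (fun n => hJC _) hy.symm (δ := r / 2)
    (fun k => (add_le_add hyx (hN k)).trans_eq (by ring)) (by linarith)

theorem stmt_11_general (hs : Convex ℝ s) (hsc : IsClosed s) (hsn : s.Nontrivial)
    (hf : AnalyticOn 𝕜 f s) (hxs : ∀ n, x n ∈ s) (hx : Summable fun n => ‖x n - x (n + 1)‖)
    (hfx : ∀ n, iteratedDerivWithin n f s (x n) = 0) : EqOn f 0 s := by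
  have hu : UniqueDiffOn 𝕜 s := fun z hz =>
    uniqueDiffWithinAt_iff_accPt.2 (hs.isPreconnected.preperfect_of_nontrivial hsn z hz)
  obtain ⟨l, hxl⟩ := cauchySeq_tendsto_of_complete
    (cauchySeq_of_summable_dist (f := x) (by simpa only [dist_eq_norm] using hx))
  have hl : l ∈ s := hsc.mem_of_tendsto hxl (Eventually.of_forall hxs)
  obtain ⟨N, hN⟩ := exists_iteratedDerivWithin_eventuallyEq_zero hs hu hf hxs hx hfx hl hxl
  have hN0 : EqOn (iteratedDerivWithin N f s) 0 s :=
    eqOn_zero_of_analyticOn_of_isPreconnected (analyticOn_iteratedDerivWithin hf hu N)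
      hs.isPreconnected hl hN
  intro y hy
  have hfy := norm_le_of_hasDerivWithinAt_succ_of_apply_eq_zero (M := 0) hs N
    (fun n _ _ => hasDerivWithinAt_iteratedDerivWithin hf hu n) (fun n _ => hxs n)
    (fun n _ => hfx n) (fun z hz => by simp [hN0 hz]) hy
  simpa using hfy

end Gontcharoff

theorem stmt_11 (a b : ℝ) (hab : a < b) (f : ℝ → ℝ)
    (hf : AnalyticOn ℝ f (Icc a b))
    (x : ℕ → ℝ) (hx : ∀ n, x n ∈ Icc a b)
    (hconv : Summable (fun n : ℕ => |x n - x (n + 1)|))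
    (hzero : ∀ n : ℕ, iteratedDerivWithin n f (Icc a b) (x n) = 0) :
    ∀ y ∈ Icc a b, f y = 0 :=
  stmt_11_general (convex_Icc a b) isClosed_Icc
    (Set.nontrivial_of_lt (left_mem_Icc.2 hab.le) (right_mem_Icc.2 hab.le) hab)
    hf hx hconv hzero
end

section
/- (Bang) Let [a,b] ⊂ ℝ with a < b and let M = (M_n)_{n∈ℕ} be a log-convex sequence of positive real numbers with M_0 = 1 such that ∑_{n=1}^∞ M_{n-1}/M_n = ∞. Let f be an infinitely differentiable function on [a,b] with sup_{t∈[a,b]} |f^(n)(t)| ≤ M_n for all n ∈ ℕ. Suppose there is a sequence (x_n)_{n∈ℕ} of points of [a,b] such that f^(n)(x_n) = 0 for all n ∈ ℕ and the series ∑_{n=1}^∞ |x_{n-1} − x_n| converges. Then f is identically zero on [a,b]. -/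
open Set

/-!
Let `σ n = e * M (n + 1) / M n`, which is monotone by log-convexity, let `L n = ∑ i < n, 1 / σ i`,
and let `ψ` be the convex piecewise linear function with `ψ (L n) = n`, so that `ψ` has slope `σ m`
between `L m` and `L (m + 1)`. Say that `f` has budget `r` at `x` from order `k` on if
`‖f⁽ʲ⁾ x‖ ≤ M j * exp (j - ψ r)` for all `j ≥ k`.

* Moving from `x` to `y` costs at most `‖y - x‖` of the budget. Indeed the bound at order `j`
  follows from the global bound `M j` as long as `ψ r ≤ j`; otherwise `ψ` has slope at least `σ j`
  at `r`, which is what Grönwall's argument needs to pass from order `j + 1` to order `j`.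
* If `f⁽ᵏ⁾ x = 0`, a budget from order `k + 1` on is a budget from order `k` on.

The global bounds give the budget `L n` at `x n` from order `n` on. Travelling along
`x n, x (n - 1), …, x 0, y` leaves at `y` a budget from order `0` on of at least `L n` minus a
constant, and `L n → ∞`.

Being convex, `ψ` is the supremum of the lines carrying its pieces. Bounding by each of these lines
separately keeps the comparison functions smooth.
-/

open Filter

namespace Bang

section PiecewiseLinear

/-- The abscissa `L n` at which the convex piecewise linear function `ψ` with successive slopes
`σ 0, σ 1, …` takes the value `n`. -/
noncomputable def vertex (σ : ℕ → ℝ) (n : ℕ) : ℝ := ∑ i ∈ Finset.range n, (σ i)⁻¹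

/-- The line carrying the piece of `ψ` that starts at `vertex σ m`, extended to all of `ℝ`. -/
noncomputable def pieceLine (σ : ℕ → ℝ) (m : ℕ) (r : ℝ) : ℝ := m + σ m * (r - vertex σ m)

variable {σ : ℕ → ℝ}

lemma vertex_succ (σ : ℕ → ℝ) (n : ℕ) : vertex σ (n + 1) = vertex σ n + (σ n)⁻¹ :=
  Finset.sum_range_succ _ _

lemma pieceLine_sub (σ : ℕ → ℝ) (m : ℕ) (r d : ℝ) :
    pieceLine σ m (r - d) = pieceLine σ m r - σ m * d := by
  unfold pieceLine; ring

lemma pieceLine_zero (σ : ℕ → ℝ) (r : ℝ) : pieceLine σ 0 r = σ 0 * r := by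
  simp [pieceLine, vertex]

lemma monotone_vertex (hpos : ∀ n, 0 < σ n) : Monotone (vertex σ) :=
  monotone_nat_of_le_succ fun n ↦ by
    rw [vertex_succ]
    exact le_add_of_nonneg_right (inv_nonneg.2 (hpos n).le)

lemma monotone_pieceLine (hpos : ∀ n, 0 < σ n) (m : ℕ) : Monotone (pieceLine σ m) :=
  fun r r' h ↦ by
    have := hpos m
    unfold pieceLine
    gcongr

lemma pieceLine_vertex_succ (σ : ℕ → ℝ) (m j : ℕ) :
    pieceLine σ m (vertex σ (j + 1)) = pieceLine σ m (vertex σ j) + σ m / σ j := by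
  rw [vertex_succ, pieceLine, pieceLine]; ring

lemma pieceLine_vertex_le (hpos : ∀ n, 0 < σ n) (hmono : Monotone σ) (m j : ℕ) :
    pieceLine σ m (vertex σ j) ≤ j := by
  have self : pieceLine σ m (vertex σ m) ≤ m := by simp [pieceLine]
  rcases le_total m j with h | h
  · induction j, h using Nat.le_induction with
    | base => exact self
    | succ j hmj ih =>
      have : σ m / σ j ≤ 1 := (div_le_one (hpos j)).2 (hmono hmj)
      rw [pieceLine_vertex_succ]
      push_cast
      linarith
  · induction h using Nat.decreasingInduction with
    | self => exact self
    | of_succ j hjm ih =>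
      have : 1 ≤ σ m / σ j := (one_le_div (hpos j)).2 (hmono hjm.le)
      rw [pieceLine_vertex_succ] at ih
      push_cast at ih
      linarith

lemma pieceLine_le_pieceLine (hpos : ∀ n, 0 < σ n) (hmono : Monotone σ) {m j : ℕ} (hmj : m ≤ j)
    {r : ℝ} (hr : vertex σ j ≤ r) : pieceLine σ m r ≤ pieceLine σ j r :=
  calc pieceLine σ m r = pieceLine σ m (vertex σ j) + σ m * (r - vertex σ j) := by
        unfold pieceLine; ring
    _ ≤ j + σ j * (r - vertex σ j) :=
        add_le_add (pieceLine_vertex_le hpos hmono m j)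
          (mul_le_mul_of_nonneg_right (hmono hmj) (sub_nonneg.2 hr))

end PiecewiseLinear

section WeightSlope

/-- The slopes `e * M (n + 1) / M n` of the function `ψ` attached to the weight sequence `M`. -/
noncomputable def weightSlope (M : ℕ → ℝ) (n : ℕ) : ℝ := Real.exp 1 * (M (n + 1) / M n)

variable {M : ℕ → ℝ}

lemma weightSlope_pos (hM : ∀ n, 0 < M n) (n : ℕ) : 0 < weightSlope M n :=
  mul_pos (Real.exp_pos 1) (div_pos (hM _) (hM _))

lemma monotone_weightSlope (hM : ∀ n, 0 < M n)
    (hlog : ∀ n : ℕ, 1 ≤ n → M n ^ 2 ≤ M (n - 1) * M (n + 1)) : Monotone (weightSlope M) :=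
  monotone_nat_of_le_succ fun n ↦ by
    refine mul_le_mul_of_nonneg_left ?_ (Real.exp_pos 1).le
    rw [div_le_div_iff₀ (hM _) (hM _)]
    simpa only [sq, Nat.add_sub_cancel, mul_comm (M n)] using hlog (n + 1) n.succ_pos

lemma weight_succ_mul_exp (hM : ∀ n, 0 < M n) (j : ℕ) (u : ℝ) :
    M (j + 1) * Real.exp ((j + 1 : ℕ) - u) = weightSlope M j * (M j * Real.exp (j - u)) := by
  have := (hM j).ne'
  rw [Nat.cast_succ, add_sub_right_comm, Real.exp_add, weightSlope]
  field_simp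

lemma tendsto_vertex_weightSlope (hM : ∀ n, 0 < M n)
    (hdiv : ¬ Summable fun n ↦ M n / M (n + 1)) : Tendsto (vertex (weightSlope M)) atTop atTop := by
  refine (not_summable_iff_tendsto_nat_atTop_of_nonneg fun n ↦
    inv_nonneg.2 (weightSlope_pos hM n).le).1 fun h ↦ hdiv ?_
  refine (h.mul_left (Real.exp 1)).congr fun n ↦ ?_
  rw [weightSlope, mul_inv, inv_div, mul_inv_cancel_left₀ (Real.exp_ne_zero 1)]

end WeightSlope

variable {V E : Type*} [NormedAddCommGroup V] [NormedSpace ℝ V] [NormedAddCommGroup E]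
  [NormedSpace ℝ E] {s : Set V} {x y : V}

lemma norm_le_mul_exp_of_norm_hasFDerivWithinAt_le (hs : Convex ℝ s) {g : V → E}
    {g' : V → V →L[ℝ] E} (hg : ∀ v ∈ s, HasFDerivWithinAt g (g' v) s v) (hx : x ∈ s) (hy : y ∈ s)
    {A c : ℝ} (hgx : ‖g x‖ ≤ A) (hg' : ∀ v ∈ s, ‖g' v‖ ≤ c * (A * Real.exp (c * ‖v - x‖))) :
    ‖g y‖ ≤ A * Real.exp (c * ‖y - x‖) := by
  set γ : ℝ → V := fun t ↦ x + t • (y - x)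
  have γ_mem : MapsTo γ (Icc 0 1) s := fun t ht ↦ hs.add_smul_sub_mem hx hy ht
  have hγ (t : ℝ) : HasDerivAt γ (y - x) t := by
    simpa [γ] using ((hasDerivAt_id t).smul_const (y - x)).const_add x
  have hgγ : ∀ t ∈ Icc (0 : ℝ) 1,
      HasDerivWithinAt (g ∘ γ) (g' (γ t) (y - x)) (Icc 0 1) t := fun t ht ↦
    (hg _ (γ_mem ht)).comp_hasDerivWithinAt t (hγ t).hasDerivWithinAt γ_mem
  have hB (t : ℝ) : HasDerivAt (fun t ↦ A * Real.exp (c * (t * ‖y - x‖)))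
      (A * (Real.exp (c * (t * ‖y - x‖)) * (c * ‖y - x‖))) t := by
    simpa using ((((hasDerivAt_id t).mul_const ‖y - x‖).const_mul c).exp).const_mul A
  have hle : ∀ t ∈ Ico (0 : ℝ) 1, ‖g' (γ t) (y - x)‖ ≤
      A * (Real.exp (c * (t * ‖y - x‖)) * (c * ‖y - x‖)) := fun t ht ↦ by
    have hdist : ‖γ t - x‖ = t * ‖y - x‖ := by
      simp [γ, norm_smul, abs_of_nonneg ht.1]
    calc ‖g' (γ t) (y - x)‖ ≤ c * (A * Real.exp (c * ‖γ t - x‖)) * ‖y - x‖ :=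
          (g' _).le_of_opNorm_le (hg' _ (γ_mem (Ico_subset_Icc_self ht))) _
      _ = _ := by rw [hdist]; ring
  simpa [γ] using image_norm_le_of_norm_deriv_right_le_deriv_boundary
    (fun t ht ↦ (hgγ t ht).continuousWithinAt)
    (fun t ht ↦ (hgγ t (Ico_subset_Icc_self ht)).mono_of_mem_nhdsWithin
      (Icc_mem_nhdsGE_of_mem ht))
    (by simpa [γ] using hgx) hB hle (right_mem_Icc.2 zero_le_one)

/-- `f` has budget `r` at `x` from order `k` on: `‖f⁽ʲ⁾ x‖ ≤ M j * exp (j - ψ r)` for `j ≥ k`, where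
`ψ r` is the supremum over `m` of `pieceLine (weightSlope M) m r`. -/
def HasBudget (M : ℕ → ℝ) (f : V → E) (s : Set V) (k : ℕ) (x : V) (r : ℝ) : Prop :=
  ∀ j, k ≤ j → ∀ m,
    ‖iteratedFDerivWithin ℝ j f s x‖ ≤ M j * Real.exp (j - pieceLine (weightSlope M) m r)

variable {M : ℕ → ℝ} {f : V → E} {k n : ℕ} {r : ℝ}

lemma HasBudget.anti (hM : ∀ n, 0 < M n) (h : HasBudget M f s k x r) {r' : ℝ} (hr : r' ≤ r) :
    HasBudget M f s k x r' := fun j hj m ↦ by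
  have := monotone_pieceLine (weightSlope_pos hM) m hr
  have := hM j
  exact (h j hj m).trans (by gcongr)

lemma HasBudget.of_succ (hM : ∀ n, 0 < M n) (h : HasBudget M f s (k + 1) x r)
    (hzero : iteratedFDerivWithin ℝ k f s x = 0) : HasBudget M f s k x r := by
  intro j hj m
  rcases hj.eq_or_lt with rfl | hj
  · rw [hzero, norm_zero]
    exact (mul_pos (hM _) (Real.exp_pos _)).le
  · exact h j hj m

lemma weight_le_mul_exp (hM : ∀ n, 0 < M n) (hmono : Monotone (weightSlope M)) {j : ℕ}
    (hr : r ≤ vertex (weightSlope M) j) (m : ℕ) :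
    M j ≤ M j * Real.exp (j - pieceLine (weightSlope M) m r) := by
  refine le_mul_of_one_le_right (hM j).le (Real.one_le_exp (sub_nonneg.2 ?_))
  exact (monotone_pieceLine (weightSlope_pos hM) m hr).trans
    (pieceLine_vertex_le (weightSlope_pos hM) hmono m j)

lemma hasBudget_vertex (hM : ∀ n, 0 < M n) (hmono : Monotone (weightSlope M))
    (hx : ∀ n, ‖iteratedFDerivWithin ℝ n f s x‖ ≤ M n) (n : ℕ) :
    HasBudget M f s n x (vertex (weightSlope M) n) := fun j hj m ↦
  (hx j).trans (weight_le_mul_exp hM hmono (monotone_vertex (weightSlope_pos hM) hj) m)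

lemma le_mul_exp_of_forall_ge (hM : ∀ n, 0 < M n) (hmono : Monotone (weightSlope M)) {j : ℕ} {u : ℝ}
    (hu : u ≤ M j)
    (hge : ∀ m, j ≤ m → u ≤ M j * Real.exp (j - pieceLine (weightSlope M) m r)) (m : ℕ) :
    u ≤ M j * Real.exp (j - pieceLine (weightSlope M) m r) := by
  rcases le_total j m with hjm | hmj
  · exact hge m hjm
  rcases le_total r (vertex (weightSlope M) j) with hr | hr
  · exact hu.trans (weight_le_mul_exp hM hmono hr m)
  · have := pieceLine_le_pieceLine (weightSlope_pos hM) hmono hmj hr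
    have := hM j
    exact (hge j le_rfl).trans (by gcongr)

lemma norm_iteratedFDerivWithin_le_of_succ (hM : ∀ n, 0 < M n) (hmono : Monotone (weightSlope M))
    (hs : Convex ℝ s) {j : ℕ} (hf : DifferentiableOn ℝ (iteratedFDerivWithin ℝ j f s) s)
    (hx : x ∈ s) (hy : y ∈ s) {m : ℕ} (hjm : j ≤ m)
    (hjx : ‖iteratedFDerivWithin ℝ j f s x‖ ≤ M j * Real.exp (j - pieceLine (weightSlope M) m r))
    (hsucc : ∀ v ∈ s, ‖iteratedFDerivWithin ℝ (j + 1) f s v‖ ≤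
      M (j + 1) * Real.exp ((j + 1 : ℕ) - pieceLine (weightSlope M) m (r - ‖v - x‖))) :
    ‖iteratedFDerivWithin ℝ j f s y‖ ≤
      M j * Real.exp (j - pieceLine (weightSlope M) m (r - ‖y - x‖)) := by
  set A := M j * Real.exp (j - pieceLine (weightSlope M) m r)
  have hA (v : V) : M j * Real.exp (j - pieceLine (weightSlope M) m (r - ‖v - x‖)) =
      A * Real.exp (weightSlope M m * ‖v - x‖) := by
    rw [pieceLine_sub, ← sub_add, Real.exp_add, mul_assoc]
  rw [hA]
  refine norm_le_mul_exp_of_norm_hasFDerivWithinAt_le hs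
    (fun v hv ↦ (hf v hv).hasFDerivWithinAt) hx hy hjx fun v hv ↦ ?_
  have : 0 ≤ A := (mul_pos (hM j) (Real.exp_pos _)).le
  calc ‖fderivWithin ℝ (iteratedFDerivWithin ℝ j f s) s v‖
      = ‖iteratedFDerivWithin ℝ (j + 1) f s v‖ := norm_fderivWithin_iteratedFDerivWithin
    _ ≤ weightSlope M j * (A * Real.exp (weightSlope M m * ‖v - x‖)) := by
        rw [← hA, ← weight_succ_mul_exp hM]
        exact hsucc v hv
    _ ≤ weightSlope M m * (A * Real.exp (weightSlope M m * ‖v - x‖)) := by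
        gcongr
        exact hmono hjm

lemma HasBudget.move (hM : ∀ n, 0 < M n) (hmono : Monotone (weightSlope M)) (hs : Convex ℝ s)
    (hf : ∀ j, DifferentiableOn ℝ (iteratedFDerivWithin ℝ j f s) s)
    (hbound : ∀ n, ∀ v ∈ s, ‖iteratedFDerivWithin ℝ n f s v‖ ≤ M n)
    (h : HasBudget M f s k x r) (hr : r ≤ vertex (weightSlope M) n) (hx : x ∈ s) (hy : y ∈ s) :
    HasBudget M f s k y (r - ‖y - x‖) := by
  have high_order {j : ℕ} (hnj : n ≤ j) {v : V} (hv : v ∈ s) (m : ℕ) :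
      ‖iteratedFDerivWithin ℝ j f s v‖ ≤
        M j * Real.exp (j - pieceLine (weightSlope M) m (r - ‖v - x‖)) := by
    have hrj : r - ‖v - x‖ ≤ vertex (weightSlope M) j :=
      (sub_le_self r (norm_nonneg _)).trans (hr.trans (monotone_vertex (weightSlope_pos hM) hnj))
    exact (hbound j v hv).trans (weight_le_mul_exp hM hmono hrj m)
  intro j hkj m
  rcases le_total n j with hnj | hjn
  · exact high_order hnj hy m
  induction hjn using Nat.decreasingInduction generalizing y m with
  | self => exact high_order le_rfl hy m
  | of_succ j _ ih =>
    exact le_mul_exp_of_forall_ge hM hmono (hbound j y hy) (fun m hjm ↦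
      norm_iteratedFDerivWithin_le_of_succ hM hmono hs (hf j) hx hy hjm (h j hkj m)
        fun v hv ↦ ih hv (hkj.trans j.le_succ) m) m

lemma hasBudget_of_zeros (hM : ∀ n, 0 < M n) (hmono : Monotone (weightSlope M)) (hs : Convex ℝ s)
    (hf : ∀ j, DifferentiableOn ℝ (iteratedFDerivWithin ℝ j f s) s)
    (hbound : ∀ n, ∀ v ∈ s, ‖iteratedFDerivWithin ℝ n f s v‖ ≤ M n)
    {x : ℕ → V} (hx : ∀ n, x n ∈ s) (hzero : ∀ n, iteratedFDerivWithin ℝ n f s (x n) = 0)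
    {i n : ℕ} (hin : i ≤ n) :
    HasBudget M f s i (x i)
      (vertex (weightSlope M) n - ∑ l ∈ Finset.Ico i n, ‖x l - x (l + 1)‖) := by
  induction hin using Nat.decreasingInduction with
  | self => simpa using hasBudget_vertex hM hmono (hbound · _ (hx n)) n
  | of_succ i hin ih =>
    have hr : vertex (weightSlope M) n - ∑ l ∈ Finset.Ico (i + 1) n, ‖x l - x (l + 1)‖ ≤
        vertex (weightSlope M) n :=
      sub_le_self _ (Finset.sum_nonneg fun _ _ ↦ norm_nonneg _)
    rw [Finset.sum_eq_sum_Ico_succ_bot hin, sub_add_eq_sub_sub_swap]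
    exact (ih.move hM hmono hs hf hbound hr (hx (i + 1)) (hx i)).of_succ hM (hzero i)

lemma norm_le_of_zeros (hM : ∀ n, 0 < M n) (hmono : Monotone (weightSlope M)) (hs : Convex ℝ s)
    (hf : ∀ j, DifferentiableOn ℝ (iteratedFDerivWithin ℝ j f s) s)
    (hbound : ∀ n, ∀ v ∈ s, ‖iteratedFDerivWithin ℝ n f s v‖ ≤ M n)
    {x : ℕ → V} (hx : ∀ n, x n ∈ s) (hzero : ∀ n, iteratedFDerivWithin ℝ n f s (x n) = 0)
    (hconv : Summable fun n ↦ ‖x n - x (n + 1)‖) (hy : y ∈ s) (n : ℕ) :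
    ‖f y‖ ≤ M 0 * Real.exp (-(weightSlope M 0 *
      (vertex (weightSlope M) n - (∑' l, ‖x l - x (l + 1)‖) - ‖y - x 0‖))) := by
  have hsum : ∑ l ∈ Finset.Ico 0 n, ‖x l - x (l + 1)‖ ≤ ∑' l, ‖x l - x (l + 1)‖ :=
    hconv.sum_le_tsum _ fun _ _ ↦ norm_nonneg _
  have htsum : 0 ≤ ∑' l, ‖x l - x (l + 1)‖ := tsum_nonneg fun _ ↦ norm_nonneg _
  have hx0 := (hasBudget_of_zeros hM hmono hs hf hbound hx hzero n.zero_le).anti hM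
    (sub_le_sub_left hsum _)
  have hy0 := hx0.move hM hmono hs hf hbound (sub_le_self _ htsum) (hx 0) hy 0 le_rfl 0
  simpa [pieceLine_zero] using hy0

end Bang

theorem stmt_12_general {V E : Type*} [NormedAddCommGroup V] [NormedSpace ℝ V]
    [NormedAddCommGroup E] [NormedSpace ℝ E] {s : Set V} (hs : Convex ℝ s)
    (hs' : UniqueDiffOn ℝ s) {M : ℕ → ℝ} (hM : ∀ n, 0 < M n)
    (hlog : ∀ n : ℕ, 1 ≤ n → M n ^ 2 ≤ M (n - 1) * M (n + 1))
    (hdiv : ¬ Summable fun n ↦ M n / M (n + 1))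
    {f : V → E} (hf : ContDiffOn ℝ (⊤ : ℕ∞) f s)
    (hbound : ∀ n, ∀ v ∈ s, ‖iteratedFDerivWithin ℝ n f s v‖ ≤ M n)
    {x : ℕ → V} (hx : ∀ n, x n ∈ s) (hzero : ∀ n, iteratedFDerivWithin ℝ n f s (x n) = 0)
    (hconv : Summable fun n ↦ ‖x n - x (n + 1)‖) :
    ∀ y ∈ s, f y = 0 := by
  intro y hy
  have hdiff (j : ℕ) : DifferentiableOn ℝ (iteratedFDerivWithin ℝ j f s) s :=
    hf.differentiableOn_iteratedFDerivWithin (mod_cast WithTop.coe_lt_top j) hs'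
  have hbudget : Tendsto (fun n ↦ Bang.vertex (Bang.weightSlope M) n - (∑' l, ‖x l - x (l + 1)‖)
      - ‖y - x 0‖) atTop atTop := by
    simpa only [sub_eq_add_neg] using tendsto_atTop_add_const_right _ _
      (tendsto_atTop_add_const_right _ _ (Bang.tendsto_vertex_weightSlope hM hdiv))
  have hlim := (Real.tendsto_exp_neg_atTop_nhds_zero.comp
    (hbudget.const_mul_atTop (Bang.weightSlope_pos hM 0))).const_mul (M 0)
  rw [mul_zero] at hlim
  have hmono := Bang.monotone_weightSlope hM hlog
  exact norm_le_zero_iff.1 (ge_of_tendsto' hlim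
    (Bang.norm_le_of_zeros hM hmono hs hdiff hbound hx hzero hconv hy))

theorem stmt_12 (a b : ℝ) (hab : a < b) (M : ℕ → ℝ) (hMpos : ∀ n, 0 < M n)
    (hM0 : M 0 = 1)
    (hlogconvex : ∀ n : ℕ, 1 ≤ n → (M n) ^ 2 ≤ M (n - 1) * M (n + 1))
    (hdiv : ¬ Summable (fun n : ℕ => M n / M (n + 1)))
    (f : ℝ → ℝ) (hf : ContDiffOn ℝ (⊤ : ℕ∞) f (Icc a b))
    (hbound : ∀ n : ℕ, ∀ t ∈ Icc a b, |iteratedDerivWithin n f (Icc a b) t| ≤ M n)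
    (x : ℕ → ℝ) (hx : ∀ n, x n ∈ Icc a b)
    (hzero : ∀ n : ℕ, iteratedDerivWithin n f (Icc a b) (x n) = 0)
    (hconv : Summable (fun n : ℕ => |x n - x (n + 1)|)) :
    ∀ y ∈ Icc a b, f y = 0 :=
  stmt_12_general (convex_Icc a b) (uniqueDiffOn_Icc hab) hMpos hlogconvex hdiv hf
    (fun n t ht ↦ norm_iteratedFDerivWithin_eq_norm_iteratedDerivWithin.trans_le (hbound n t ht))
    hx (fun n ↦ norm_eq_zero.1 <| norm_iteratedFDerivWithin_eq_norm_iteratedDerivWithin.trans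
      (norm_eq_zero.2 (hzero n))) hconv
end

section
/- Let [a,b] ⊂ ℝ with a < b and let M = (M_n)_{n∈ℕ} be a log-convex sequence of positive real numbers with M_0 = 1 such that ∑_{n=1}^∞ M_{n-1}/M_n = ∞. Let f be an infinitely differentiable function on [a,b] with sup_{t∈[a,b]} |f^(n)(t)| ≤ M_n for all n ∈ ℕ. If f^(n)(a) > 0 for all n ∈ ℕ, then f^(n)(x) > 0 for all n ∈ ℕ and all x ∈ [a,b]. -/
open Set

/-!
The hypotheses pass to derivatives, so it suffices to show that `f` itself is positive. If `f`
had a zero `x₀`, then `f'` could not be positive on all of `[a, x₀]`, so it would have a zero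
`x₁ ≤ x₀`, and inductively `f⁽ⁿ⁾` would have a zero `xₙ ≤ xₙ₋₁`. This contradicts `f(a) > 0` by
Bang's theorem: if `f⁽ⁿ⁾(xₙ) = 0` for all `n` and the path `x₀, x₁, …` has finite length, then
`f = 0`.

For Bang's theorem, walk backwards along `…, x₂, x₁, x₀` and then straight to an arbitrary point.
Fix `N`. As long as the length covered so far is at most `¼ ∑_{K ≤ i < N} M_i / M_{i+1}`, one has
`|f⁽ʲ⁾| ≤ 2 ^ (j - K) M_j`. This is the given bound if `j ≥ K`. If `j < K`, the walk restricted to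
`f⁽ʲ⁾` starts from its zero `x_j`; the bound for `K + 1` holds up to the last stretch, of length at
most `M_K / (4 M_{K+1}) ≤ M_j / (4 M_{j+1})`, over which the mean value inequality and the bound for
`f⁽ʲ⁺¹⁾` cost at most a factor `2`. The whole walk has finite length while the sums diverge as
`N → ∞`, so `|f| ≤ 2 ^ (-K) M_0` for every `K`.
-/

section BangTheorem

lemma le_pow_mul_div_pow {r c : ℝ} (hr : 1 ≤ r) (hc : 0 ≤ c) {K j : ℕ} (hKj : K ≤ j) :
    c ≤ r ^ j * c / r ^ K := by
  rw [mul_div_right_comm]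
  exact le_mul_of_one_le_left hc ((one_le_div (by positivity)).mpr (pow_le_pow_right₀ hr hKj))

lemma exists_mem_segment_dist_le {E : Type*} [SeminormedAddCommGroup E] [NormedSpace ℝ E]
    {x y : E} {α δ : ℝ} (hα : 0 ≤ α) (hδ : 0 ≤ δ) (hxy : dist x y ≤ α + δ) :
    ∃ z ∈ segment ℝ x y, dist x z ≤ α ∧ dist z y ≤ δ := by
  rcases (add_nonneg hα hδ).eq_or_lt with hsum | hsum
  · exact ⟨x, left_mem_segment ℝ x y, by simpa using hα, by linarith⟩
  have hcoeff : α / (α + δ) + δ / (α + δ) = 1 := by rw [← add_div, div_self hsum.ne']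
  have hα' : 0 ≤ α / (α + δ) := by positivity
  have hδ' : 0 ≤ δ / (α + δ) := by positivity
  refine ⟨AffineMap.lineMap x y (α / (α + δ)), ?_, ?_, ?_⟩
  · rw [segment_eq_image_lineMap]
    exact mem_image_of_mem _ ⟨hα', by linarith⟩
  · rw [dist_left_lineMap, Real.norm_of_nonneg hα']
    calc α / (α + δ) * dist x y ≤ α / (α + δ) * (α + δ) := by gcongr
      _ = α := div_mul_cancel₀ _ hsum.ne'
  · rw [dist_lineMap_right, ← hcoeff, add_sub_cancel_left, Real.norm_of_nonneg hδ']
    calc δ / (α + δ) * dist x y ≤ δ / (α + δ) * (α + δ) := by gcongr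
      _ = δ := div_mul_cancel₀ _ hsum.ne'

variable {𝕜 E : Type*} [RCLike 𝕜] [NormedAddCommGroup E] [NormedSpace 𝕜 E] {s : Set 𝕜}

lemma norm_le_of_two_mul_norm_le_near {f f' : 𝕜 → E} (hs : Convex ℝ s)
    (hderiv : ∀ z ∈ s, HasDerivWithinAt f (f' z) s z) {x y : 𝕜} (hx : x ∈ s) (hy : y ∈ s)
    (hfx : f x = 0) {α δ A B : ℝ} (hδ : 0 ≤ δ) (hxy : dist x y ≤ α + δ)
    (hnear : ∀ z ∈ s, dist x z ≤ α → 2 * ‖f z‖ ≤ A)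
    (hf' : ∀ z ∈ s, dist x z ≤ dist x y → ‖f' z‖ ≤ B) (hB : 2 * (B * δ) ≤ A) : ‖f y‖ ≤ A := by
  have hB0 : 0 ≤ B := (norm_nonneg _).trans (hf' y hy le_rfl)
  obtain ⟨z, hz, hxz, hzy⟩ := exists_mem_segment_dist_le (α := max 0 α) (le_max_left _ _) hδ
    (hxy.trans (add_le_add_left (le_max_right _ _) δ))
  have hsub : segment ℝ x y ⊆ s := hs.segment_subset hx hy
  have hfz : 2 * ‖f z‖ ≤ A := by
    rcases le_max_iff.mp hxz with hxz | hxz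
    · rw [← dist_le_zero.mp hxz, hfx, norm_zero, mul_zero]
      exact le_trans (by positivity) hB
    · exact hnear z (hsub hz) hxz
  have hball : ∀ w ∈ segment ℝ x y, dist x w ≤ dist x y := fun w hw => by
    simpa only [Metric.mem_closedBall, dist_comm w x] using segment_subset_closedBall_left x y hw
  have hmean : ‖f y - f z‖ ≤ B * δ :=
    calc ‖f y - f z‖ ≤ B * ‖y - z‖ :=
          (convex_segment x y).norm_image_sub_le_of_norm_hasDerivWithin_le
            (fun w hw => (hderiv w (hsub hw)).mono hsub)
            (fun w hw => hf' w (hsub hw) (hball w hw)) hz (right_mem_segment ℝ x y)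
      _ ≤ B * δ := by rw [← dist_eq_norm, dist_comm]; gcongr
  linarith [norm_sub_norm_le (f y) (f z)]

variable {g : ℕ → 𝕜 → E} {M : ℕ → ℝ} {x : ℕ → 𝕜}

/-- The invariant of the walk: `L j` bounds the length already covered on reaching `x j`. -/
lemma norm_le_of_length_le_sum_Ico {L : ℕ → ℝ} (hs : Convex ℝ s) (hM : ∀ n, 0 < M n)
    (hratio : Antitone fun n => M n / M (n + 1))
    (hderiv : ∀ n, ∀ y ∈ s, HasDerivWithinAt (g n) (g (n + 1) y) s y)
    (hbound : ∀ n, ∀ y ∈ s, ‖g n y‖ ≤ M n) (hx : ∀ n, x n ∈ s) (hzero : ∀ n, g n (x n) = 0)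
    (hL : ∀ n, 0 ≤ L n) (hstep : ∀ n, dist (x n) (x (n + 1)) + L (n + 1) ≤ L n)
    {K N : ℕ} (hKN : K ≤ N) (j : ℕ) {y : 𝕜} (hy : y ∈ s)
    (hlen : 4 * (L j + dist (x j) y) ≤ ∑ i ∈ Finset.Ico K N, M i / M (i + 1)) :
    ‖g j y‖ ≤ 2 ^ j * M j / 2 ^ K := by
  induction hKN using Nat.decreasingInduction generalizing j y with
  | self =>
    have hdist : dist (x j) y = 0 := by
      rw [Finset.Ico_self, Finset.sum_empty] at hlen
      linarith [hL j, dist_nonneg (x := x j) (y := y)]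
    have := hM j
    rw [← dist_eq_zero.mp hdist, hzero, norm_zero]
    positivity
  | of_succ K hKN ihK =>
    rcases le_total K j with hKj | hjK
    · exact (hbound j y hy).trans (le_pow_mul_div_pow one_le_two (hM j).le hKj)
    induction hjK using Nat.decreasingInduction generalizing y with
    | self => exact (hbound K y hy).trans (le_pow_mul_div_pow one_le_two (hM K).le le_rfl)
    | of_succ j hjK ihj =>
      rw [Finset.sum_eq_sum_Ico_succ_bot hKN] at hlen ihj
      set R := ∑ i ∈ Finset.Ico (K + 1) N, M i / M (i + 1)
      have hδ : 0 ≤ M K / M (K + 1) / 4 := by linarith [div_pos (hM K) (hM (K + 1))]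
      refine norm_le_of_two_mul_norm_le_near (α := R / 4 - L j)
        (B := 2 ^ (j + 1) * M (j + 1) / 2 ^ K) hs (hderiv j) (hx j) hy (hzero j) hδ
        (by linarith) (fun z hz hxz => ?_) (fun z hz hxz => ihj hz ?_) ?_
      · have hz_le := ihK j hz (by linarith)
        rw [pow_succ, ← div_div, le_div_iff₀ two_pos] at hz_le
        linarith
      · linarith [hstep j, dist_triangle_left (x (j + 1)) z (x j)]
      · have hdrop : M (j + 1) * (M K / M (K + 1)) ≤ M j := by
          rw [mul_comm, ← le_div_iff₀ (hM (j + 1))]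
          exact hratio hjK.le
        calc 2 * (2 ^ (j + 1) * M (j + 1) / 2 ^ K * (M K / M (K + 1) / 4))
            = 2 ^ j * (M (j + 1) * (M K / M (K + 1))) / 2 ^ K := by ring
          _ ≤ 2 ^ j * M j / 2 ^ K := by gcongr

theorem eq_zero_of_summable_dist_zeros (hs : Convex ℝ s) (hM : ∀ n, 0 < M n)
    (hratio : Antitone fun n => M n / M (n + 1)) (hdiv : ¬ Summable fun n => M n / M (n + 1))
    (hderiv : ∀ n, ∀ y ∈ s, HasDerivWithinAt (g n) (g (n + 1) y) s y)
    (hbound : ∀ n, ∀ y ∈ s, ‖g n y‖ ≤ M n) (hx : ∀ n, x n ∈ s) (hzero : ∀ n, g n (x n) = 0)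
    (hlength : Summable fun n => dist (x n) (x (n + 1))) {y : 𝕜} (hy : y ∈ s) : g 0 y = 0 := by
  set L : ℕ → ℝ := fun n => ∑' i, dist (x (i + n)) (x (i + n + 1))
  have hL : ∀ n, 0 ≤ L n := fun n => tsum_nonneg fun i => dist_nonneg
  have hstep : ∀ n, dist (x n) (x (n + 1)) + L (n + 1) ≤ L n := fun n => by
    have htail := ((summable_nat_add_iff n).mpr hlength).tsum_eq_zero_add
    simp only [zero_add, add_right_comm _ 1 n] at htail
    exact htail.ge
  have htop : Filter.Tendsto (fun N => ∑ i ∈ Finset.range N, M i / M (i + 1))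
      Filter.atTop Filter.atTop :=
    (not_summable_iff_tendsto_nat_atTop_of_nonneg fun n => (div_pos (hM n) (hM _)).le).mp hdiv
  have hdecay : ∀ K : ℕ, ‖g 0 y‖ ≤ M 0 / 2 ^ K := fun K => by
    obtain ⟨N, hN, hKN⟩ := ((htop.eventually_ge_atTop
      (∑ i ∈ Finset.range K, M i / M (i + 1) + 4 * (L 0 + dist (x 0) y))).and
        (Filter.eventually_ge_atTop K)).exists
    rw [← Finset.sum_range_add_sum_Ico _ hKN] at hN
    simpa only [pow_zero, one_mul] using norm_le_of_length_le_sum_Ico hs hM hratio hderiv hbound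
      hx hzero hL hstep hKN 0 hy (le_of_add_le_add_left hN)
  have hlim : Filter.Tendsto (fun K : ℕ => M 0 / 2 ^ K) Filter.atTop (nhds 0) :=
    tendsto_const_nhds.div_atTop (tendsto_pow_atTop_atTop_of_one_lt one_lt_two)
  exact norm_le_zero_iff.mp (ge_of_tendsto' hlim hdecay)

end BangTheorem

lemma summable_dist_succ_of_antitone {x : ℕ → ℝ} (hx : Antitone x) (hbdd : BddBelow (range x)) :
    Summable fun n => dist (x n) (x (n + 1)) := by
  obtain ⟨c, hc⟩ := hbdd
  refine summable_of_sum_range_le (c := x 0 - c) (fun n => dist_nonneg) fun N => ?_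
  have hdist : ∀ n, dist (x n) (x (n + 1)) = x n - x (n + 1) := fun n => by
    rw [Real.dist_eq, abs_of_nonneg (sub_nonneg.mpr (hx n.le_succ))]
  simp only [hdist, Finset.sum_range_sub']
  exact sub_le_sub_left (hc (mem_range_self N)) _

lemma exists_deriv_eq_zero_of_lt_of_pos {f f' : ℝ → ℝ} {a z : ℝ} (haz : a ≤ z)
    (hderiv : ∀ y ∈ Icc a z, HasDerivWithinAt f (f' y) (Icc a z) y)
    (hf : f z < f a) (hf' : 0 < f' a) : ∃ y ∈ Icc a z, f' y = 0 := by
  by_contra! hne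
  have ha : a ∈ Icc a z := left_mem_Icc.mpr haz
  rcases hasDerivWithinAt_forall_lt_or_forall_gt_of_forall_ne (convex_Icc a z) hderiv hne
    with hneg | hpos
  · exact (hneg a ha).not_gt hf'
  · have hmono : MonotoneOn f (Icc a z) :=
      monotoneOn_of_hasDerivWithinAt_nonneg (convex_Icc a z)
        (fun y hy => (hderiv y hy).continuousWithinAt)
        (fun y hy => (hderiv y (interior_subset hy)).mono interior_subset)
        (fun y hy => (hpos y (interior_subset hy)).le)
    exact (hmono ha (right_mem_Icc.mpr haz) haz).not_gt hf

lemma exists_antitone_zeros {a b : ℝ} {g : ℕ → ℝ → ℝ}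
    (hderiv : ∀ n, ∀ y ∈ Icc a b, HasDerivWithinAt (g n) (g (n + 1) y) (Icc a b) y)
    (hpos : ∀ n, 0 < g n a) (hzero : ∃ z ∈ Icc a b, g 0 z = 0) :
    ∃ x : ℕ → ℝ, Antitone x ∧ ∀ n, x n ∈ Icc a b ∧ g n (x n) = 0 := by
  have hnext : ∀ n, ∀ z ∈ Icc a b, g n z = 0 → ∃ y ∈ Icc a b, g (n + 1) y = 0 ∧ y ≤ z := by
    intro n z hz hgz
    have hsub : Icc a z ⊆ Icc a b := Icc_subset_Icc_right hz.2
    obtain ⟨y, hy, hgy⟩ := exists_deriv_eq_zero_of_lt_of_pos hz.1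
      (fun y hy => (hderiv n y (hsub hy)).mono hsub) (hgz ▸ hpos n) (hpos (n + 1))
    exact ⟨y, hsub hy, hgy, hy.2⟩
  have hnonempty : ∀ n, (Icc a b ∩ g n ⁻¹' {0}).Nonempty := fun n => by
    induction n with
    | zero => exact hzero
    | succ n ih =>
      obtain ⟨z, hz, hgz⟩ := ih
      obtain ⟨y, hy, hgy, -⟩ := hnext n z hz hgz
      exact ⟨y, hy, hgy⟩
  have hcompact : ∀ n, IsCompact (Icc a b ∩ g n ⁻¹' {0}) := fun n =>
    isCompact_Icc.of_isClosed_subset (ContinuousOn.preimage_isClosed_of_isClosed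
      (fun y hy => (hderiv n y hy).continuousWithinAt) isClosed_Icc isClosed_singleton)
      inter_subset_left
  choose x hx using fun n => (hcompact n).exists_isLeast (hnonempty n)
  refine ⟨x, antitone_nat_of_succ_le fun n => ?_, fun n => (hx n).1⟩
  obtain ⟨y, hy, hgy, hyx⟩ := hnext n (x n) (hx n).1.1 (hx n).1.2
  exact ((hx (n + 1)).2 ⟨hy, hgy⟩).trans hyx

theorem pos_of_forall_pos_left_endpoint {a b : ℝ} {g : ℕ → ℝ → ℝ} {M : ℕ → ℝ} (hM : ∀ n, 0 < M n)
    (hratio : Antitone fun n => M n / M (n + 1)) (hdiv : ¬ Summable fun n => M n / M (n + 1))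
    (hderiv : ∀ n, ∀ y ∈ Icc a b, HasDerivWithinAt (g n) (g (n + 1) y) (Icc a b) y)
    (hbound : ∀ n, ∀ y ∈ Icc a b, |g n y| ≤ M n) (hpos : ∀ n, 0 < g n a) {y : ℝ}
    (hy : y ∈ Icc a b) : 0 < g 0 y := by
  by_contra! hgy
  have hsub : Icc a y ⊆ Icc a b := Icc_subset_Icc_right hy.2
  have hcont : ContinuousOn (g 0) (Icc a b) := fun z hz => (hderiv 0 z hz).continuousWithinAt
  obtain ⟨z, hz, hgz⟩ := intermediate_value_Icc' hy.1 (hcont.mono hsub) ⟨hgy, (hpos 0).le⟩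
  obtain ⟨x, hx, hzeros⟩ := exists_antitone_zeros hderiv hpos ⟨z, hsub hz, hgz⟩
  have hlength := summable_dist_succ_of_antitone hx
    ⟨a, forall_mem_range.mpr fun n => (hzeros n).1.1⟩
  have ha : g 0 a = 0 :=
    eq_zero_of_summable_dist_zeros (convex_Icc a b) hM hratio hdiv hderiv hbound
      (fun n => (hzeros n).1) (fun n => (hzeros n).2) hlength
      (left_mem_Icc.mpr (hy.1.trans hy.2))
  exact (hpos 0).ne' ha

lemma antitone_div_succ_of_sq_le_mul {M : ℕ → ℝ} (hM : ∀ n, 0 < M n)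
    (hlogconvex : ∀ n, M (n + 1) ^ 2 ≤ M n * M (n + 2)) :
    Antitone fun n => M n / M (n + 1) :=
  antitone_nat_of_succ_le fun n => by
    rw [div_le_div_iff₀ (hM _) (hM _), ← sq]
    exact hlogconvex n

lemma hasDerivWithinAt_iteratedDerivWithin_of_contDiffOn {𝕜 F : Type*} [NontriviallyNormedField 𝕜]
    [NormedAddCommGroup F] [NormedSpace 𝕜 F] {f : 𝕜 → F} {s : Set 𝕜} {m : WithTop ℕ∞} {n : ℕ}
    (hf : ContDiffOn 𝕜 m f s) (hn : n < m) (hs : UniqueDiffOn 𝕜 s) {x : 𝕜} (hx : x ∈ s) :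
    HasDerivWithinAt (iteratedDerivWithin n f s) (iteratedDerivWithin (n + 1) f s x) s x := by
  rw [iteratedDerivWithin_succ]
  exact (hf.differentiableOn_iteratedDerivWithin hn hs x hx).hasDerivWithinAt

theorem stmt_14 (a b : ℝ) (hab : a < b) (M : ℕ → ℝ) (hMpos : ∀ n, 0 < M n)
    (hM0 : M 0 = 1)
    (hlogconvex : ∀ n : ℕ, 1 ≤ n → (M n) ^ 2 ≤ M (n - 1) * M (n + 1))
    (hdiv : ¬ Summable (fun n : ℕ => M n / M (n + 1)))
    (f : ℝ → ℝ) (hf : ContDiffOn ℝ (⊤ : ℕ∞) f (Icc a b))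
    (hbound : ∀ n : ℕ, ∀ t ∈ Icc a b, |iteratedDerivWithin n f (Icc a b) t| ≤ M n)
    (hpos : ∀ n : ℕ, 0 < iteratedDerivWithin n f (Icc a b) a) :
    ∀ n : ℕ, ∀ x ∈ Icc a b, 0 < iteratedDerivWithin n f (Icc a b) x := by
  intro n x hx
  have hratio : Antitone fun k => M k / M (k + 1) :=
    antitone_div_succ_of_sq_le_mul hMpos fun k => hlogconvex (k + 1) k.succ_pos
  have hderiv : ∀ k, ∀ y ∈ Icc a b, HasDerivWithinAt (iteratedDerivWithin k f (Icc a b))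
      (iteratedDerivWithin (k + 1) f (Icc a b) y) (Icc a b) y := fun k y hy =>
    hasDerivWithinAt_iteratedDerivWithin_of_contDiffOn hf (mod_cast ENat.natCast_lt_top k)
      (uniqueDiffOn_Icc hab) hy
  exact pos_of_forall_pos_left_endpoint (g := fun k => iteratedDerivWithin (n + k) f (Icc a b))
    (M := fun k => M (n + k)) (fun k => hMpos _) (fun i j hij => hratio (Nat.add_le_add_left hij n))
    (by simpa only [← add_assoc, add_comm _ n] using (summable_nat_add_iff n).not.mpr hdiv)
    (fun k => hderiv (n + k)) (fun k => hbound (n + k)) (fun k => hpos (n + k)) hx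
end

section
/- (Carleman) Let [a,b] ⊂ ℝ with a < b and let M = (M_n)_{n∈ℕ} be a log-convex sequence of positive real numbers with M_0 = 1 such that ∑_{n=1}^∞ M_{n-1}/M_n = ∞. Then the Borel mapping at the point a is not surjective: there exists a real sequence (g_n)_{n∈ℕ} such that no f ∈ C_M([a,b]) satisfies f^(n)(a) = n!·g_n for all n ∈ ℕ. In fact, if (g_n) is any sequence of positive reals with limsup_{n→∞} g_n^{1/n} = ∞ (so that the power series ∑ g_n x^n has radius of convergence 0), then no f ∈ C_M([a,b]) satisfies f^(n)(a) = n!·g_n for all n. -/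
open Set

open Filter Topology

open scoped Nat

/-!
Let `f ∈ C_M([a,b])` have nonnegative derivatives of every order at `a`. A one-sided form of Bang's
argument shows that every `f⁽ⁿ⁾` is nonnegative on all of `[a,b]`: after rescaling `M` so that
`|f⁽ⁿ⁾| ≤ Mₙ`, if `f⁽ⁿ⁾ ≥ -exp (n - K - 1) Mₙ` for all `n` at some point, then
`f⁽ⁿ⁾ ≥ -exp (n - K) Mₙ` for all `n` up to distance `M_K / (e M_{K+1})` to its right. At `a` such
bounds hold for every `K`, and since these distances have infinite sum, any point of `[a,b]` is
reached from `a` with `K` still arbitrarily large. With all derivatives nonnegative, each Taylor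
term `gₙ (b - a)ⁿ` is at most `f b`, so `∑ gₙ xⁿ` has positive radius of convergence.
-/

theorem exists_le_sum_Ico_of_not_summable_s15 {u : ℕ → ℝ} (hu : ∀ n, 0 ≤ u n) (hdiv : ¬ Summable u)
    (K : ℕ) (B : ℝ) : ∃ N ≥ K, B ≤ ∑ j ∈ Finset.Ico K N, u j := by
  have htail : Tendsto (fun n ↦ ∑ j ∈ Finset.range n, u (j + K)) atTop atTop :=
    (not_summable_iff_tendsto_nat_atTop_of_nonneg fun j ↦ hu (j + K)).1
      fun h ↦ hdiv ((summable_nat_add_iff K).1 h)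
  obtain ⟨n, hn⟩ := (htail.eventually_ge_atTop B).exists
  refine ⟨n + K, Nat.le_add_left K n, ?_⟩
  rw [Finset.sum_Ico_eq_sum_range, Nat.add_sub_cancel]
  simpa only [add_comm] using hn

section WeightSequences

/-- A positive weight sequence, log-convex in the sense that its ratios `Mₙ₊₁ / Mₙ` increase, for
which Carleman's series `∑ Mₙ / Mₙ₊₁` diverges. -/
structure IsQuasianalyticWeight (M : ℕ → ℝ) : Prop where
  pos : ∀ n, 0 < M n
  monotone_ratio : Monotone fun n ↦ M (n + 1) / M n
  not_summable : ¬ Summable fun n ↦ M n / M (n + 1)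

variable {M : ℕ → ℝ}

theorem monotone_ratio_of_sq_le_mul (hpos : ∀ n, 0 < M n)
    (hlogconvex : ∀ n, 1 ≤ n → M n ^ 2 ≤ M (n - 1) * M (n + 1)) :
    Monotone fun n ↦ M (n + 1) / M n := by
  refine monotone_nat_of_le_succ fun n ↦ ?_
  rw [div_le_div_iff₀ (hpos n) (hpos (n + 1)), ← sq, mul_comm]
  exact hlogconvex (n + 1) n.succ_pos

theorem IsQuasianalyticWeight.const_mul_pow_mul (hM : IsQuasianalyticWeight M) {c C : ℝ}
    (hc : 0 < c) (hC : 0 < C) : IsQuasianalyticWeight fun n ↦ c * C ^ n * M n := by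
  have hratio (n : ℕ) :
      c * C ^ (n + 1) * M (n + 1) / (c * C ^ n * M n) = C * (M (n + 1) / M n) := by
    have := (hM.pos n).ne'
    rw [pow_succ]
    field_simp
  refine ⟨fun n ↦ mul_pos (by positivity) (hM.pos n), ?_, fun hsum ↦ hM.not_summable ?_⟩
  · simpa only [hratio] using hM.monotone_ratio.const_mul hC.le
  · refine (hsum.mul_left C).congr fun n ↦ ?_
    rw [← inv_div, hratio, mul_inv, inv_div, mul_inv_cancel_left₀ hC.ne']

end WeightSequences

section Bang

/-- `F (n + 1)` is the derivative of `F n` on `s`, for every `n`. This packages a function `F 0`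
with all its derivatives. -/
def IsDerivTower (F : ℕ → ℝ → ℝ) (s : Set ℝ) : Prop :=
  ∀ n, ∀ x ∈ s, HasDerivWithinAt (F n) (F (n + 1) x) s x

/-- The one-sided Bang degree of the tower `F` at `x`, relative to the weights `M`, is at least `r`.
Bang's original notion bounds `|F n x|` instead of `-F n x`. -/
def BangDegreeGE (F : ℕ → ℝ → ℝ) (M : ℕ → ℝ) (x r : ℝ) : Prop :=
  ∀ n : ℕ, -(Real.exp (n - r) * M n) ≤ F n x

variable {F : ℕ → ℝ → ℝ} {M : ℕ → ℝ} {a b x x₀ : ℝ}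

theorem BangDegreeGE.mono {r s : ℝ} (hM : ∀ n, 0 ≤ M n) (h : BangDegreeGE F M x s) (hrs : r ≤ s) :
    BangDegreeGE F M x r := by
  intro n
  refine le_trans (neg_le_neg ?_) (h n)
  have := hM n
  gcongr

theorem bangDegreeGE_of_nonneg (hM : ∀ n, 0 ≤ M n) (hx : ∀ n, 0 ≤ F n x) (r : ℝ) :
    BangDegreeGE F M x r :=
  fun n ↦ (neg_nonpos.2 (mul_nonneg (Real.exp_pos _).le (hM n))).trans (hx n)

theorem nonneg_of_forall_bangDegreeGE (h : ∀ K : ℕ, BangDegreeGE F M x K) (n : ℕ) :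
    0 ≤ F n x := by
  have hlim : Tendsto (fun K : ℕ ↦ -(Real.exp (n - K) * M n)) atTop (𝓝 0) := by
    have hexp : Tendsto (fun K : ℕ ↦ Real.exp (n - K)) atTop (𝓝 0) :=
      Real.tendsto_exp_atBot.comp
        (tendsto_const_nhds.add_atBot (tendsto_neg_atTop_atBot.comp tendsto_natCast_atTop_atTop))
    simpa only [zero_mul, neg_zero] using (hexp.mul_const (M n)).neg
  exact le_of_tendsto' hlim fun K ↦ h K n

theorem neg_mul_exp_le_of_hasDerivWithinAt {f f' : ℝ → ℝ} {p q A c : ℝ}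
    (hf : ∀ x ∈ Icc p q, HasDerivWithinAt f (f' x) (Icc p q) x) (hp : -A ≤ f p)
    (hf' : ∀ x ∈ Icc p q, -(A * (Real.exp (c * (x - p)) * c)) ≤ f' x) :
    ∀ x ∈ Icc p q, -(A * Real.exp (c * (x - p))) ≤ f x := by
  have hexp (x : ℝ) : HasDerivAt (fun x ↦ -(A * Real.exp (c * (x - p))))
      (-(A * (Real.exp (c * (x - p)) * c))) x := by
    simpa using ((((hasDerivAt_id x).sub_const p).const_mul c).exp.const_mul A).fun_neg
  refine image_le_of_deriv_right_le_deriv_boundary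
    (fun x _ ↦ (hexp x).continuousAt.continuousWithinAt) (fun x _ ↦ (hexp x).hasDerivWithinAt)
    (by simpa using hp) (fun x hx ↦ (hf x hx).continuousWithinAt) (fun x hx ↦ ?_)
    (fun x hx ↦ hf' x (Ico_subset_Icc_self hx))
  exact (hf x (Ico_subset_Icc_self hx)).mono_of_mem_nhdsWithin (Icc_mem_nhdsGE_of_mem hx)

theorem neg_mul_exp_le_of_le {w y s t d : ℝ} (hw : 0 ≤ w) (hy : -w ≤ y) (hst : s ≤ t)
    (hd : 0 ≤ d) : -(Real.exp (t - s) * w * Real.exp d) ≤ y := by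
  refine le_trans (neg_le_neg ?_) hy
  rw [mul_right_comm, ← Real.exp_add]
  exact le_mul_of_one_le_left hw (Real.one_le_exp (by linarith))

-- For `n > K` the bound is weaker than `hlower`; for `n ≤ K` it follows by integrating the bound
-- for `n + 1` from `x₀`, since `M (n + 1) ≤ M (K + 1) / M K * M n`.
theorem BangDegreeGE.neg_mul_exp_le (hM : ∀ n, 0 < M n)
    (hmono : Monotone fun n ↦ M (n + 1) / M n) (hF : IsDerivTower F (Icc a b))
    (hlower : ∀ n, ∀ x ∈ Icc a b, -M n ≤ F n x) {K : ℕ} (hx₀ : a ≤ x₀)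
    (hdeg : BangDegreeGE F M x₀ (K + 1)) (n : ℕ) :
    ∀ x ∈ Icc x₀ b, -(Real.exp (n - (K + 1)) * M n *
      Real.exp (Real.exp 1 * (M (K + 1) / M K) * (x - x₀))) ≤ F n x := by
  set c := Real.exp 1 * (M (K + 1) / M K) with hc
  have hc_nonneg : 0 ≤ c := (mul_pos (Real.exp_pos 1) (div_pos (hM _) (hM _))).le
  have hsub : Icc x₀ b ⊆ Icc a b := Icc_subset_Icc_left hx₀
  have hlarge (m : ℕ) (hm : K + 1 ≤ m) (x : ℝ) (hx : x ∈ Icc x₀ b) :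
      -(Real.exp (m - (K + 1)) * M m * Real.exp (c * (x - x₀))) ≤ F m x :=
    neg_mul_exp_le_of_le (hM m).le (hlower m x (hsub hx)) (mod_cast hm)
      (mul_nonneg hc_nonneg (sub_nonneg.2 hx.1))
  rcases le_total (K + 1) n with hn | hn
  · exact hlarge n hn
  induction hn using Nat.decreasingInduction with
  | self => exact hlarge (K + 1) le_rfl
  | of_succ m hm ih =>
    refine neg_mul_exp_le_of_hasDerivWithinAt
      (fun x hx ↦ (hF m x (hsub hx)).mono hsub) (hdeg m) fun x hx ↦ ?_
    refine le_trans (neg_le_neg ?_) (ih x hx)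
    have hratio : M (m + 1) ≤ M (K + 1) / M K * M m :=
      (div_le_iff₀ (hM m)).1 (hmono (Nat.le_of_lt_succ hm))
    have hexp : Real.exp ((m + 1 : ℕ) - (K + 1)) = Real.exp (m - (K + 1)) * Real.exp 1 := by
      rw [← Real.exp_add]
      push_cast
      ring_nf
    calc Real.exp ((m + 1 : ℕ) - (K + 1)) * M (m + 1) * Real.exp (c * (x - x₀))
        ≤ Real.exp ((m + 1 : ℕ) - (K + 1)) * (M (K + 1) / M K * M m) *
            Real.exp (c * (x - x₀)) := by gcongr
      _ = Real.exp (m - (K + 1)) * M m * (Real.exp (c * (x - x₀)) * c) := by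
          rw [hexp, hc]
          ring

theorem BangDegreeGE.of_succ (hM : ∀ n, 0 < M n)
    (hmono : Monotone fun n ↦ M (n + 1) / M n) (hF : IsDerivTower F (Icc a b))
    (hlower : ∀ n, ∀ x ∈ Icc a b, -M n ≤ F n x) {K : ℕ} (hx₀ : a ≤ x₀)
    (hdeg : BangDegreeGE F M x₀ (K + 1)) (hx : x ∈ Icc x₀ b)
    (hstep : x - x₀ ≤ M K / M (K + 1) / Real.exp 1) : BangDegreeGE F M x K := by
  intro n
  refine le_trans (neg_le_neg ?_) (hdeg.neg_mul_exp_le hM hmono hF hlower hx₀ n x hx)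
  have hKpos : 0 < M (K + 1) / M K := div_pos (hM _) (hM _)
  have hle_one : Real.exp 1 * (M (K + 1) / M K) * (x - x₀) ≤ 1 := by
    rwa [mul_comm, ← le_div_iff₀ (by positivity), mul_comm, ← div_div, one_div_div]
  rw [mul_right_comm, ← Real.exp_add]
  exact mul_le_mul_of_nonneg_right (Real.exp_le_exp.2 (by linarith)) (hM n).le

theorem bangDegreeGE_of_le_add_sum (hM : ∀ n, 0 < M n)
    (hmono : Monotone fun n ↦ M (n + 1) / M n) (hF : IsDerivTower F (Icc a b))
    (hlower : ∀ n, ∀ x ∈ Icc a b, -M n ≤ F n x) (ha : ∀ n, 0 ≤ F n a) {K N : ℕ} (hKN : K ≤ N) :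
    ∀ x ∈ Icc a b, x ≤ a + ∑ j ∈ Finset.Ico K N, M j / M (j + 1) / Real.exp 1 →
      BangDegreeGE F M x K := by
  induction hKN using Nat.decreasingInduction with
  | self =>
    intro x hx hxa
    obtain rfl : x = a := le_antisymm (by simpa using hxa) hx.1
    exact bangDegreeGE_of_nonneg (fun n ↦ (hM n).le) ha N
  | of_succ K hK ih =>
    intro x hx hxK
    set x₀ := a + ∑ j ∈ Finset.Ico (K + 1) N, M j / M (j + 1) / Real.exp 1
    have hax₀ : a ≤ x₀ := le_add_of_nonneg_right <| Finset.sum_nonneg fun j _ ↦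
      (div_pos (div_pos (hM _) (hM _)) (Real.exp_pos 1)).le
    rcases le_total x x₀ with hxx₀ | hxx₀
    · exact (ih x hx hxx₀).mono (fun n ↦ (hM n).le) (by simp)
    · have hdeg : BangDegreeGE F M x₀ (K + 1) := mod_cast ih x₀ ⟨hax₀, hxx₀.trans hx.2⟩ le_rfl
      refine hdeg.of_succ hM hmono hF hlower hax₀ ⟨hxx₀, hx.2⟩ ?_
      rw [Finset.sum_eq_sum_Ico_succ_bot hK] at hxK
      linarith

theorem IsDerivTower.nonneg_of_nonneg_left (hF : IsDerivTower F (Icc a b))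
    (hM : IsQuasianalyticWeight M) (hlower : ∀ n, ∀ x ∈ Icc a b, -M n ≤ F n x)
    (ha : ∀ n, 0 ≤ F n a) (n : ℕ) : ∀ x ∈ Icc a b, 0 ≤ F n x := by
  intro x hx
  refine nonneg_of_forall_bangDegreeGE (M := M) (fun K ↦ ?_) n
  obtain ⟨N, hKN, hN⟩ := exists_le_sum_Ico_of_not_summable_s15
    (u := fun j ↦ M j / M (j + 1) / Real.exp 1)
    (fun j ↦ (div_pos (div_pos (hM.pos _) (hM.pos _)) (Real.exp_pos 1)).le)
    (fun h ↦ hM.not_summable ((summable_div_const_iff (Real.exp_ne_zero 1)).1 h)) K (x - a)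
  exact bangDegreeGE_of_le_add_sum hM.pos hM.monotone_ratio hF hlower ha hKN x hx (by linarith)

end Bang

section Borel

variable {f : ℝ → ℝ} {a b : ℝ}

theorem isDerivTower_iteratedDerivWithin {s : Set ℝ} (hs : UniqueDiffOn ℝ s)
    (hf : ContDiffOn ℝ (⊤ : ℕ∞) f s) : IsDerivTower (fun n ↦ iteratedDerivWithin n f s) s := by
  intro n x hx
  have hdiff : DifferentiableOn ℝ (iteratedDerivWithin n f s) s :=
    hf.differentiableOn_iteratedDerivWithin (mod_cast ENat.natCast_lt_top n) hs
  simpa only [iteratedDerivWithin_succ] using (hdiff x hx).hasDerivWithinAt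

theorem MemCM.iteratedDerivWithin_nonneg {M : ℕ → ℝ} (hab : a < b) (hM : IsQuasianalyticWeight M)
    (hf : MemCM a b M f) (ha : ∀ n, 0 ≤ iteratedDerivWithin n f (Icc a b) a) (n : ℕ) :
    ∀ x ∈ Icc a b, 0 ≤ iteratedDerivWithin n f (Icc a b) x := by
  obtain ⟨hsmooth, c, C, hc, hC, hbound⟩ := hf
  exact (isDerivTower_iteratedDerivWithin (uniqueDiffOn_Icc hab) hsmooth).nonneg_of_nonneg_left
    (hM.const_mul_pow_mul hc hC) (fun n x hx ↦ neg_le_of_abs_le (hbound n x hx)) ha n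

theorem iteratedDerivWithin_div_factorial_mul_pow_le (hab : a < b)
    (hf : ContDiffOn ℝ (⊤ : ℕ∞) f (Icc a b))
    (hnonneg : ∀ n, ∀ x ∈ Icc a b, 0 ≤ iteratedDerivWithin n f (Icc a b) x) (n : ℕ) :
    iteratedDerivWithin n f (Icc a b) a / n ! * (b - a) ^ n ≤ f b := by
  have : 0 ≤ b - a := sub_nonneg.2 hab.le
  have hcont : ContDiffOn ℝ n f (Icc a b) := hf.of_le (mod_cast le_top)
  have hdiff : DifferentiableOn ℝ (iteratedDerivWithin n f (Icc a b)) (Ioo a b) :=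
    (hf.differentiableOn_iteratedDerivWithin (mod_cast ENat.natCast_lt_top n)
      (uniqueDiffOn_Icc hab)).mono Ioo_subset_Icc_self
  rw [← uIcc_of_le hab.le] at hcont hdiff
  rw [← uIoo_of_le hab.le] at hdiff
  obtain ⟨ξ, hξ, hremainder⟩ := taylor_mean_remainder_lagrange hab.ne hcont hdiff
  rw [uIcc_of_le hab.le] at hremainder
  rw [uIoo_of_le hab.le] at hξ
  have hremainder_nonneg : 0 ≤ f b - taylorWithinEval f n (Icc a b) a b := by
    rw [hremainder]
    have := hnonneg (n + 1) ξ (Ioo_subset_Icc_self hξ)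
    positivity
  have hterm (k : ℕ) : 0 ≤ ((k ! : ℝ)⁻¹ * (b - a) ^ k) • iteratedDerivWithin k f (Icc a b) a :=
    smul_nonneg (by positivity) (hnonneg k a (left_mem_Icc.2 hab.le))
  calc iteratedDerivWithin n f (Icc a b) a / n ! * (b - a) ^ n
      = ((n ! : ℝ)⁻¹ * (b - a) ^ n) • iteratedDerivWithin n f (Icc a b) a := by
        rw [smul_eq_mul]
        ring
    _ ≤ taylorWithinEval f n (Icc a b) a b := by
        rw [taylor_within_apply]
        exact Finset.single_le_sum (fun k _ ↦ hterm k) (Finset.self_mem_range_succ n)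
    _ ≤ f b := sub_nonneg.1 hremainder_nonneg

theorem limsup_ofReal_rpow_one_div_lt_top {g : ℕ → ℝ} (hg : ∀ n, 0 ≤ g n) {r B : ℝ} (hr : 0 < r)
    (hbound : ∀ n, g n * r ^ n ≤ B) :
    limsup (fun n : ℕ ↦ ENNReal.ofReal (g n ^ (1 / (n : ℝ)))) atTop < ⊤ := by
  have hroot : ∀ n : ℕ, 1 ≤ n → g n ^ (1 / (n : ℝ)) ≤ max 1 B / r := by
    intro n hn
    have hn0 : n ≠ 0 := Nat.one_le_iff_ne_zero.1 hn
    have hpow : g n ≤ (max 1 B / r) ^ n := by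
      rw [div_pow, le_div_iff₀ (pow_pos hr n)]
      calc g n * r ^ n ≤ max 1 B := (hbound n).trans (le_max_right 1 B)
        _ ≤ max 1 B ^ n := le_self_pow₀ (le_max_left 1 B) hn0
    rw [one_div]
    exact (Real.rpow_inv_le_iff_of_pos (hg n) (by positivity) (by positivity)).2
      (by rwa [Real.rpow_natCast])
  calc limsup (fun n : ℕ ↦ ENNReal.ofReal (g n ^ (1 / (n : ℝ)))) atTop
      ≤ ENNReal.ofReal (max 1 B / r) := by
        refine limsup_le_of_le (by isBoundedDefault) ?_
        filter_upwards [eventually_ge_atTop 1] with n hn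
        exact ENNReal.ofReal_le_ofReal (hroot n hn)
    _ < ⊤ := ENNReal.ofReal_lt_top

theorem MemCM.limsup_taylorCoeff_lt_top {M : ℕ → ℝ} (hab : a < b) (hM : IsQuasianalyticWeight M)
    (hf : MemCM a b M f) (ha : ∀ n, 0 ≤ iteratedDerivWithin n f (Icc a b) a) :
    limsup (fun n : ℕ ↦ ENNReal.ofReal
      ((iteratedDerivWithin n f (Icc a b) a / n !) ^ (1 / (n : ℝ)))) atTop < ⊤ :=
  limsup_ofReal_rpow_one_div_lt_top (fun n ↦ div_nonneg (ha n) (Nat.cast_nonneg _))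
    (sub_pos.2 hab) (iteratedDerivWithin_div_factorial_mul_pow_le hab hf.1
      (hf.iteratedDerivWithin_nonneg hab hM ha))

theorem limsup_ofReal_add_one_pow_rpow_one_div :
    limsup (fun n : ℕ ↦ ENNReal.ofReal ((((n : ℝ) + 1) ^ n) ^ (1 / (n : ℝ)))) atTop = ⊤ := by
  have hlinear : Tendsto (fun n : ℕ ↦ ENNReal.ofReal ((n : ℝ) + 1)) atTop (𝓝 ⊤) :=
    ENNReal.tendsto_ofReal_atTop.comp
      (tendsto_atTop_add_const_right _ 1 tendsto_natCast_atTop_atTop)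
  refine (hlinear.congr' ?_).limsup_eq
  filter_upwards [eventually_ne_atTop 0] with n hn
  rw [one_div, Real.pow_rpow_inv_natCast (by positivity) hn]

end Borel

theorem stmt_15_general (a b : ℝ) (hab : a < b) (M : ℕ → ℝ) (hMpos : ∀ n, 0 < M n)
    (hlogconvex : ∀ n : ℕ, 1 ≤ n → (M n) ^ 2 ≤ M (n - 1) * M (n + 1))
    (hdiv : ¬ Summable (fun n : ℕ ↦ M n / M (n + 1))) :
    (∃ g : ℕ → ℝ, ¬ ∃ f : ℝ → ℝ, MemCM a b M f ∧
        ∀ n : ℕ, iteratedDerivWithin n f (Icc a b) a = (n ! : ℝ) * g n) ∧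
    (∀ g : ℕ → ℝ, (∀ n, 0 ≤ g n) →
      limsup (fun n : ℕ ↦ ENNReal.ofReal ((g n) ^ (1 / (n : ℝ)))) atTop = ⊤ →
      ¬ ∃ f : ℝ → ℝ, MemCM a b M f ∧
        ∀ n : ℕ, iteratedDerivWithin n f (Icc a b) a = (n ! : ℝ) * g n) := by
  have hM : IsQuasianalyticWeight M :=
    ⟨hMpos, monotone_ratio_of_sq_le_mul hMpos hlogconvex, hdiv⟩
  refine (and_iff_right_of_imp fun hno_preimage ↦ ?_).2 ?_
  · exact ⟨fun n ↦ ((n : ℝ) + 1) ^ n, hno_preimage _ (fun n ↦ by positivity)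
      limsup_ofReal_add_one_pow_rpow_one_div⟩
  · rintro g hg hlimsup ⟨f, hf, hfg⟩
    have hcoeff (n : ℕ) : iteratedDerivWithin n f (Icc a b) a / n ! = g n := by
      rw [hfg, mul_div_cancel_left₀ _ (Nat.cast_ne_zero.2 n.factorial_ne_zero)]
    have hlt := hf.limsup_taylorCoeff_lt_top hab hM fun n ↦ by
      rw [hfg]
      exact mul_nonneg (Nat.cast_nonneg _) (hg n)
    simp only [hcoeff] at hlt
    exact hlt.ne hlimsup

/-- Carleman's theorem: the Borel map at `a` is not surjective on a quasi-analytic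
Denjoy–Carleman class; in fact no power series of radius of convergence `0` with positive
coefficients is attained. -/
theorem stmt_15 (a b : ℝ) (hab : a < b) (M : ℕ → ℝ) (hMpos : ∀ n, 0 < M n)
    (hM0 : M 0 = 1)
    (hlogconvex : ∀ n : ℕ, 1 ≤ n → (M n) ^ 2 ≤ M (n - 1) * M (n + 1))
    (hdiv : ¬ Summable (fun n : ℕ => M n / M (n + 1))) :
    (∃ g : ℕ → ℝ, ¬ ∃ f : ℝ → ℝ, MemCM a b M f ∧
        ∀ n : ℕ, iteratedDerivWithin n f (Icc a b) a = (Nat.factorial n : ℝ) * g n) ∧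
    (∀ g : ℕ → ℝ, (∀ n, 0 < g n) →
      Filter.limsup (fun n : ℕ => ENNReal.ofReal ((g n) ^ (1 / (n : ℝ))))
        Filter.atTop = ⊤ →
      ¬ ∃ f : ℝ → ℝ, MemCM a b M f ∧
        ∀ n : ℕ, iteratedDerivWithin n f (Icc a b) a = (Nat.factorial n : ℝ) * g n) := by
  obtain ⟨hnot_surjective, hno_preimage⟩ := stmt_15_general a b hab M hMpos hlogconvex hdiv
  exact ⟨hnot_surjective, fun g hg ↦ hno_preimage g fun n ↦ (hg n).le⟩
end
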